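/- arXiv:1906.01948 — 3 statements merged into one kernel-verified Lean document; each statement's English description precedes it below -/
import Mathlib

section
/- For every integer n ≥ 2, the map ds_n : J_n → J_{n−2} is surjective: for every g ∈ J_{n−2} there exists f ∈ J_n with ds_n(f) = g. -/
/-!
Common setup: `R n` is the ring of Laurent polynomials
`ℤ[x₁^{±1}, …, xₙ^{±1}]`, realized as the group algebra over `ℤ` of the
group `ℤ^n` of exponent vectors (`AddMonoidAlgebra ℤ (Fin n → ℤ)`).
-/

noncomputable section

/-- The ring `Rₙ = ℤ[x₁^{±1}, …, xₙ^{±1}]` of Laurent polynomials in `n` variables. -/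
abbrev R (n : ℕ) : Type := AddMonoidAlgebra ℤ (Fin n → ℤ)

/-- The variable `xᵢ` of `R n` (`i` is a `0`-based index). -/
def X {n : ℕ} (i : Fin n) : R n := AddMonoidAlgebra.single (Pi.single i (1 : ℤ)) 1

/-- The inverse `xᵢ⁻¹` of the variable `xᵢ` of `R n`. -/
def Xinv {n : ℕ} (i : Fin n) : R n := AddMonoidAlgebra.single (Pi.single i (-1 : ℤ)) 1

/-- The action of a permutation `w` on exponent vectors. -/
def permExp {n : ℕ} (w : Equiv.Perm (Fin n)) : (Fin n → ℤ) →+ (Fin n → ℤ) :=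
  AddMonoidHom.mk' (fun m => m ∘ w.symm) (fun _ _ => rfl)

/-- The action of `w ∈ Sₙ` on `R n`, permuting the variables (`xᵢ ↦ x_{w i}`). -/
def permHom {n : ℕ} (w : Equiv.Perm (Fin n)) : R n →+* R n :=
  AddMonoidAlgebra.mapDomainRingHom ℤ (permExp w)

/-- `f` is a symmetric Laurent polynomial, i.e. `f ∈ Rₙ^{Sₙ}`. -/
def SymmP {n : ℕ} (f : R n) : Prop := ∀ w : Equiv.Perm (Fin n), permHom w f = f

/-- The map of exponent groups underlying the evaluation
`xᵢ ↦ xᵢ (1 ≤ i ≤ n-2), x_{n-1} ↦ t, xₙ ↦ t⁻¹`; the second coordinate of the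
target records the exponent of `t`. -/
def evExp (n : ℕ) : (Fin n → ℤ) →+ ((Fin (n - 2) → ℤ) × ℤ) :=
  AddMonoidHom.mk'
    (fun m => (fun i => m (Fin.castLE (Nat.sub_le n 2) i),
      if h : 2 ≤ n then m ⟨n - 2, by omega⟩ - m ⟨n - 1, by omega⟩ else 0))
    (by
      intro a b
      refine Prod.ext (funext fun i => rfl) ?_
      by_cases h : 2 ≤ n
      · simp [h]; ring
      · simp [h])

/-- The evaluation homomorphism
`evₙ : ℤ[x₁^{±1},…,xₙ^{±1}] → ℤ[x₁^{±1},…,x_{n-2}^{±1}, t^{±1}]` determined by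
`xᵢ ↦ xᵢ` for `1 ≤ i ≤ n-2`, `x_{n-1} ↦ t`, `xₙ ↦ t⁻¹`.  The target is realized
as the group algebra of `ℤ^{n-2} × ℤ`, the last factor recording the exponent
of `t`. -/
def ev (n : ℕ) : R n →+* AddMonoidAlgebra ℤ ((Fin (n - 2) → ℤ) × ℤ) :=
  AddMonoidAlgebra.mapDomainRingHom ℤ (evExp n)

/-- An element of `ℤ[x₁^{±1},…,x_{n-2}^{±1}, t^{±1}]` "does not involve `t`",
i.e. it lies in the image of the subring `ℤ[x₁^{±1},…,x_{n-2}^{±1}]`. -/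
def NoT (n : ℕ) (g : AddMonoidAlgebra ℤ ((Fin (n - 2) → ℤ) × ℤ)) : Prop :=
  g ∈ Set.range
    (AddMonoidAlgebra.mapDomainRingHom ℤ (AddMonoidHom.inl (Fin (n - 2) → ℤ) ℤ))

/-- `J n`: for `n ≥ 2`, the set of symmetric Laurent polynomials `f` such that
`evₙ f` does not involve `t`; for `n = 0, 1` it is all of `Rₙ^{Sₙ}`. -/
def J (n : ℕ) : Set (R n) := {f | SymmP f ∧ (2 ≤ n → NoT n (ev n f))}

/-- Restriction of exponent vectors to the first `n - 2` coordinates. -/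
def resExp (n : ℕ) : (Fin n → ℤ) →+ (Fin (n - 2) → ℤ) :=
  AddMonoidHom.mk' (fun m i => m (Fin.castLE (Nat.sub_le n 2) i)) (fun _ _ => rfl)

/-- The ring homomorphism `R n → R (n-2)` which, on `J n`, is the
Duflo–Serganova map `dsₙ`: for `f ∈ J n` it is exactly `evₙ f` regarded as an
element of `ℤ[x₁^{±1},…,x_{n-2}^{±1}]` (the `t`-degree-`0` part of `evₙ f`). -/
def ds (n : ℕ) : R n →+* R (n - 2) :=
  AddMonoidAlgebra.mapDomainRingHom ℤ (resExp n)

/-- The product `∏_{1 ≤ i < j ≤ n} (1 - xᵢ xⱼ)`. -/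
def P (n : ℕ) : R n :=
  ∏ p ∈ Finset.univ.filter (fun p : Fin n × Fin n => p.1 < p.2), (1 - X p.1 * X p.2)

/-!
A lift of `g ∈ J k` through `ds (k + 2)` is the alternating sum
`f = ∑ ± g(x_{Iᶜ}, 1, …, 1) ∏_{i ∉ I, j ∈ I} (1 - xᵢ xⱼ) / (xⱼ - xᵢ)`
over the nonempty subsets `I` of `{1, …, k + 2}` of even cardinality, with sign `+` when `#I = 2`.
Over the common denominator `∏_{i < j} (xⱼ - xᵢ)` its numerator is antisymmetric, hence divisible by
that denominator, so `f` is a symmetric Laurent polynomial. Let `a`, `b` be the two indices with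
`x_a x_b = 1`. A term whose `I` contains exactly one of them vanishes. For nonempty `I` disjoint
from `{a, b}`, the terms of `I` and `I ∪ {a, b}` carry the same product, because
`(1 - x z) / (z - x) * ((1 - y z) / (z - y)) = 1` when `x y = 1`, and the same value of `g`, because
`g ∈ J k` allows the pair `x_a, x_a⁻¹` to be replaced by `1, 1`; having opposite signs, they cancel.
Only `I = {a, b}` survives, and its term is `g`.
-/

namespace DufloSerganova

open Finset Function AddMonoidAlgebra

section Evaluation

variable {n : ℕ} {B C : Type*} [CommRing B] [CommRing C]

/-- The variable `xᵢ`, as a unit of `R n`. -/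
def unitX (i : Fin n) : (R n)ˣ where
  val := X i
  inv := Xinv i
  val_inv := by
    rw [X, Xinv, single_mul_single, ← Pi.single_add, add_neg_cancel, Pi.single_zero, one_mul,
      one_def]
  inv_val := by
    rw [X, Xinv, single_mul_single, ← Pi.single_add, neg_add_cancel, Pi.single_zero, one_mul,
      one_def]

@[simp]
lemma val_unitX (i : Fin n) : (unitX i : R n) = X i := rfl

lemma X_injective : Injective (X : Fin n → R n) :=
  (single_left_injective one_ne_zero).comp fun i j h => by
    simpa [Pi.single_apply] using congrFun h i

lemma permHom_X (w : Equiv.Perm (Fin n)) (i : Fin n) : permHom w (X i) = X (w i) := by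
  simp only [permHom, X, mapDomainRingHom_apply, mapDomain_single]
  congr 1
  ext j
  simp [permExp, Pi.single_apply, Equiv.symm_apply_eq]

lemma laurent_ringHom_ext {φ ψ : R n →+* B} (h : ∀ i, φ (X i) = ψ (X i)) : φ = ψ := by
  refine ringHom_ext' (RingHom.ext_int _ _) ?_
  refine MonoidHom.toHomUnitsMulEquiv.injective ?_
  refine MonoidHom.toAdditiveRight.injective ?_
  refine AddMonoidHom.functions_ext' _ _ _ fun i => AddMonoidHom.ext_int ?_
  exact Units.ext (h i)

/-- The ring homomorphism from a group algebra over `ℤ` induced by a character `χ` of the group;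
characters are written additively, with values in `Additive Bˣ`. -/
def liftCharacter {M : Type*} [AddMonoid M] (χ : M →+ Additive Bˣ) :
    AddMonoidAlgebra ℤ M →+* B :=
  (AddMonoidAlgebra.lift ℤ B M
    ((Units.coeHom B).comp (AddMonoidHom.toMultiplicativeLeft χ))).toRingHom

lemma liftCharacter_single {M : Type*} [AddMonoid M] (χ : M →+ Additive Bˣ) (m : M) :
    liftCharacter χ (single m 1) = ((χ m).toMul : B) := by
  simp [liftCharacter]

/-- Evaluation of a Laurent polynomial in `n` variables at an `n`-tuple of units. -/
def evalAt (u : Fin n → Bˣ) : R n →+* B :=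
  liftCharacter (Fintype.linearCombination ℤ (Additive.ofMul ∘ u)).toAddMonoidHom

@[simp]
lemma evalAt_X (u : Fin n → Bˣ) (i : Fin n) : evalAt u (X i) = u i := by
  simp [evalAt, X, liftCharacter_single]

lemma evalAt_map_unitX (φ : R n →+* B) : evalAt (Units.map (φ : R n →* B) ∘ unitX) = φ :=
  laurent_ringHom_ext fun i => by simp

lemma comp_evalAt (φ : B →+* C) (u : Fin n → Bˣ) :
    φ.comp (evalAt u) = evalAt (Units.map (φ : B →* C) ∘ u) :=
  laurent_ringHom_ext fun i => by simp

lemma evalAt_comp_perm {f : R n} (hf : SymmP f) (w : Equiv.Perm (Fin n)) (u : Fin n → Bˣ) :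
    evalAt (u ∘ w) f = evalAt u f := by
  have h : (evalAt u).comp (permHom w) = evalAt (u ∘ w) :=
    laurent_ringHom_ext fun i => by simp [permHom_X]
  rw [← h, RingHom.comp_apply, hf w]

end Evaluation

section DufloSerganovaEvaluation

variable {k : ℕ} {B : Type*} [CommRing B]

/-- The target `ℤ[x₁^{±1}, …, x_k^{±1}, t^{±1}]` of `ev (k + 2)`. -/
abbrev RT (k : ℕ) : Type := AddMonoidAlgebra ℤ ((Fin k → ℤ) × ℤ)

/-- The inclusion `ℤ[x₁^{±1}, …, x_k^{±1}] → ℤ[x₁^{±1}, …, x_k^{±1}, t^{±1}]`. -/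
abbrev incl (k : ℕ) : R k →+* RT k := mapDomainRingHom ℤ (AddMonoidHom.inl (Fin k → ℤ) ℤ)

/-- The variable `t`, as a unit of `RT k`. -/
def unitT (k : ℕ) : (RT k)ˣ where
  val := single (0, 1) 1
  inv := single (0, -1) 1
  val_inv := by rw [single_mul_single, one_def]; rfl
  inv_val := by rw [single_mul_single, one_def]; rfl

/-- `ev (k + 2)` with its target written `RT k`; the index `k + 2 - 2` occurring in the type of
`ev (k + 2)` equals `k` by definition but not syntactically. -/
def evRT (k : ℕ) : R (k + 2) →+* RT k := ev (k + 2)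

/-- The tuple `(u₁, …, u_k, t, t⁻¹)`. -/
def snocInvPair {G : Type*} [Inv G] (u : Fin k → G) (t : G) : Fin (k + 2) → G :=
  Fin.snoc (Fin.snoc u t : Fin (k + 1) → G) t⁻¹

lemma comp_snocInvPair {G H : Type*} [Group G] [Group H] (φ : G →* H) (u : Fin k → G) (t : G) :
    φ ∘ snocInvPair u t = snocInvPair (φ ∘ u) (φ t) := by
  simp only [snocInvPair, Fin.comp_snoc, map_inv]

lemma univ_map_snocInvPair {G : Type*} [Inv G] (u : Fin k → G) (t : G) :
    univ.val.map (snocInvPair u t) = t ::ₘ t⁻¹ ::ₘ univ.val.map u := by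
  have univ_map_snoc {l : ℕ} (u : Fin l → G) (t : G) :
      univ.val.map (Fin.snoc u t : Fin (l + 1) → G) = t ::ₘ univ.val.map u := by
    simp [Fin.univ_castSuccEmb, Function.comp_def]
  rw [snocInvPair, univ_map_snoc, univ_map_snoc, Multiset.cons_swap]

lemma incl_X (i : Fin k) : incl k (X i) = single (Pi.single i 1, 0) 1 := mapDomain_single

lemma evExp_add_two (m : Fin (k + 2) → ℤ) :
    evExp (k + 2) m = (fun i : Fin k => m i.castSucc.castSucc,
      m (Fin.last k).castSucc - m (Fin.last (k + 1))) := by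
  refine Prod.ext rfl ?_
  simp only [evExp, AddMonoidHom.mk'_apply]
  exact dif_pos (by omega)

lemma evRT_X_eq_single {i : Fin (k + 2)} {m : Fin k → ℤ} {d : ℤ}
    (hm : ∀ j : Fin k, (Pi.single i 1 : Fin (k + 2) → ℤ) j.castSucc.castSucc = m j)
    (hd : (Pi.single i 1 : Fin (k + 2) → ℤ) (Fin.last k).castSucc -
      (Pi.single i 1 : Fin (k + 2) → ℤ) (Fin.last (k + 1)) = d) :
    evRT k (X i) = (single (m, d) 1 : RT k) :=
  mapDomain_single.trans
    (congrArg (single · 1) ((evExp_add_two _).trans (Prod.ext (funext hm) hd)))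

lemma evRT_X_last : evRT k (X (Fin.last (k + 1))) = (↑(unitT k)⁻¹ : RT k) :=
  evRT_X_eq_single (fun j => Pi.single_eq_of_ne (Fin.castSucc_ne_last _) _)
    (by simp [Fin.ext_iff])

lemma evRT_X_castSucc_last : evRT k (X (Fin.last k).castSucc) = (unitT k : RT k) :=
  evRT_X_eq_single (fun j => Pi.single_eq_of_ne (by simp) _) (by simp [Fin.ext_iff])

lemma evRT_X_castSucc_castSucc (i : Fin k) : evRT k (X i.castSucc.castSucc) = incl k (X i) :=
  (evRT_X_eq_single (m := Pi.single i 1) (d := 0) (fun j => by simp [Pi.single_apply])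
    (by grind)).trans (incl_X i).symm

/-- The tuple `(x₁, …, x_k, t, t⁻¹)` of units of `RT k` at which `ev (k + 2)` evaluates. -/
def evUnits (k : ℕ) : Fin (k + 2) → (RT k)ˣ :=
  snocInvPair (Units.map (incl k : R k →* RT k) ∘ unitX) (unitT k)

lemma evRT_eq_evalAt : evRT k = evalAt (evUnits k) := by
  refine laurent_ringHom_ext fun i => ?_
  rw [evalAt_X, evUnits, snocInvPair]
  cases i using Fin.lastCases with
  | last => rw [Fin.snoc_last, evRT_X_last]
  | cast i =>
    cases i using Fin.lastCases with
    | last => rw [Fin.snoc_castSucc, Fin.snoc_last, evRT_X_castSucc_last]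
    | cast i => rw [Fin.snoc_castSucc, Fin.snoc_castSucc, evRT_X_castSucc_castSucc]; rfl

lemma evUnits_injective : Injective (evUnits k) := by
  simp only [evUnits, snocInvPair, Fin.snoc_injective_iff, Fin.range_snoc]
  have incl_injective : Injective (incl k) := mapDomain_injective fun _ _ h => (Prod.mk.inj h).1
  refine ⟨⟨fun i j h => X_injective (incl_injective congr(Units.val $h)), ?_⟩, ?_⟩
  · rintro ⟨i, hi⟩
    simpa [unitT, single_left_inj] using! (incl_X i).symm.trans congr(Units.val $hi)
  · rintro (h | ⟨i, hi⟩)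
    · simpa [unitT, single_left_inj] using! congr(Units.val $h)
    · simpa [unitT, single_left_inj] using! (incl_X i).symm.trans congr(Units.val $hi)

/-- Evaluation of an element of `RT k` at `x = u` and at a value of `t`. -/
def evalT (u : Fin k → Bˣ) (t : Bˣ) : RT k →+* B :=
  liftCharacter ((Fintype.linearCombination ℤ (Additive.ofMul ∘ u)).toAddMonoidHom.coprod
    (zmultiplesHom _ (Additive.ofMul t)))

lemma evalT_comp_incl (u : Fin k → Bˣ) (t : Bˣ) : (evalT u t).comp (incl k) = evalAt u :=
  laurent_ringHom_ext fun i => by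
    simp [evalT, X, evalAt, liftCharacter_single]

lemma evalT_unitT (u : Fin k → Bˣ) (t : Bˣ) :
    Units.map (evalT u t : RT k →* B) (unitT k) = t := by
  ext
  simp [evalT, unitT, liftCharacter_single]

lemma evalT_comp_evRT (u : Fin k → Bˣ) (t : Bˣ) :
    (evalT u t).comp (evRT k) = evalAt (snocInvPair u t) := by
  have evalT_incl : Units.map (evalT u t : RT k →* B) ∘
      Units.map (incl k : R k →* RT k) ∘ unitX = u := by
    ext i
    exact congr($(evalT_comp_incl u t) (X i)).trans (evalAt_X u i)
  rw [evRT_eq_evalAt, comp_evalAt, evUnits, comp_snocInvPair, evalT_unitT, evalT_incl]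

lemma evalAt_snocInvPair_eq {g : R (k + 2)} (hg : g ∈ J (k + 2)) (u : Fin k → Bˣ) (s t : Bˣ) :
    evalAt (snocInvPair u s) g = evalAt (snocInvPair u t) g := by
  obtain ⟨g₀, hg₀ : incl k g₀ = evRT k g⟩ := hg.2 (by omega)
  have h (t : Bˣ) : evalAt (snocInvPair u t) g = evalAt u g₀ := by
    rw [← evalT_comp_evRT, RingHom.comp_apply, ← hg₀, ← RingHom.comp_apply, evalT_comp_incl]
  rw [h, h]

lemma ds_eq_of_evRT_eq_incl {f : R (k + 2)} {g : R k} (h : evRT k f = incl k g) :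
    ds (k + 2) f = g := by
  have hds : ds (k + 2) = (mapDomainRingHom ℤ (AddMonoidHom.fst (Fin k → ℤ) ℤ)).comp
      (evRT k) := mapDomainRingHom_comp (AddMonoidHom.fst (Fin k → ℤ) ℤ) (evExp (k + 2))
  rw [hds, RingHom.comp_apply, h, ← RingHom.comp_apply, ← mapDomainRingHom_comp,
    AddMonoidHom.fst_comp_inl, mapDomainRingHom_id, RingHom.id_apply]

end DufloSerganovaEvaluation

section PaddedEvaluation

variable {k : ℕ} {B C : Type*} [CommRing B] [CommRing C]

lemma exists_perm_of_univ_map_eq {ι α : Type*} [Fintype ι] {u v : ι → α}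
    (h : univ.val.map u = univ.val.map v) : ∃ σ : Equiv.Perm ι, u = v ∘ σ := by
  classical
  have card_fiber (w : ι → α) (a : α) :
      Fintype.card {i // w i = a} = (univ.val.map w).count a := by
    simp [Multiset.count_map, Fintype.card_subtype, Finset.card_def, eq_comm]
  have equiv_fiber (a : α) : Nonempty ({i // u i = a} ≃ {i // v i = a}) :=
    Fintype.card_eq.mp (by rw [card_fiber, card_fiber, h])
  let e (a : α) := (equiv_fiber a).some
  exact ⟨Equiv.ofFiberEquiv e, funext fun i => (Equiv.ofFiberEquiv_map e i).symm⟩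

lemma exists_univ_map_eq {α : Type*} {s : Multiset α} (h : s.card = k) :
    ∃ u : Fin k → α, univ.val.map u = s := by
  obtain ⟨l, rfl⟩ : ∃ l : List α, ↑l = s := ⟨s.toList, s.coe_toList⟩
  obtain rfl : l.length = k := h
  exact ⟨l.get, by rw [Fin.univ_val_map, List.ofFn_get]⟩

/-- The multiset `s` padded with copies of `1` to cardinality `k`, provided `s.card ≤ k`. -/
def padOnes {G : Type*} [One G] (k : ℕ) (s : Multiset G) : Multiset G :=
  s + Multiset.replicate (k - s.card) 1

open Classical in
/-- The value of a symmetric Laurent polynomial in `k` variables at a multiset of at most `k`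
units, the missing arguments being set to `1`. It is `0` on larger multisets. -/
def padEval (g : R k) (s : Multiset Bˣ) : B :=
  if h : ∃ u : Fin k → Bˣ, univ.val.map u = padOnes k s then evalAt h.choose g else 0

lemma padEval_eq_evalAt {g : R k} (hg : SymmP g) {s : Multiset Bˣ} {u : Fin k → Bˣ}
    (hu : univ.val.map u = padOnes k s) : padEval g s = evalAt u g := by
  have h : ∃ u : Fin k → Bˣ, univ.val.map u = padOnes k s := ⟨u, hu⟩
  obtain ⟨σ, hσ⟩ := exists_perm_of_univ_map_eq (h.choose_spec.trans hu.symm)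
  rw [padEval, dif_pos h, hσ, evalAt_comp_perm hg]

lemma padEval_univ_map {g : R k} (hg : SymmP g) (u : Fin k → Bˣ) :
    padEval g (univ.val.map u) = evalAt u g :=
  padEval_eq_evalAt hg (by simp [padOnes])

lemma map_padEval {g : R k} (hg : SymmP g) (φ : B →+* C) {s : Multiset Bˣ} (hs : s.card ≤ k) :
    φ (padEval g s) = padEval g (s.map (Units.map (φ : B →* C))) := by
  obtain ⟨u, hu⟩ : ∃ u : Fin k → Bˣ, univ.val.map u = padOnes k s :=
    exists_univ_map_eq (by simp [padOnes]; omega)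
  rw [padEval_eq_evalAt hg hu, ← RingHom.comp_apply, comp_evalAt]
  refine (padEval_eq_evalAt hg ?_).symm
  rw [← Multiset.map_map, hu]
  simp [padOnes]

lemma padEval_cons_cons_inv {g : R k} (hg : g ∈ J k) {s : Multiset Bˣ} (hs : s.card + 2 ≤ k)
    (t : Bˣ) : padEval g (t ::ₘ t⁻¹ ::ₘ s) = padEval g s := by
  obtain ⟨l, rfl⟩ := Nat.exists_eq_add_of_le' (show 2 ≤ k by omega)
  obtain ⟨u, hu⟩ : ∃ u : Fin l → Bˣ, univ.val.map u = padOnes l s :=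
    exists_univ_map_eq (by simp [padOnes]; omega)
  have replicate_one : Multiset.replicate (l + 2 - s.card) (1 : Bˣ) =
      1 ::ₘ 1 ::ₘ Multiset.replicate (l - s.card) 1 := by
    rw [show l + 2 - s.card = l - s.card + 2 by omega]
    rfl
  calc padEval g (t ::ₘ t⁻¹ ::ₘ s) = evalAt (snocInvPair u t) g :=
        padEval_eq_evalAt hg.1 (by rw [univ_map_snocInvPair, hu]; simp [padOnes])
    _ = evalAt (snocInvPair u 1) g := evalAt_snocInvPair_eq hg u t 1
    _ = padEval g s := (padEval_eq_evalAt hg.1 (by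
        rw [univ_map_snocInvPair, hu]; simp [padOnes, replicate_one])).symm

end PaddedEvaluation

section Divisibility

lemma prod_dvd_of_prime {ι M : Type*} [CommMonoidWithZero M] {s : Finset ι} {p : ι → M} {N : M}
    (hp : ∀ i ∈ s, Prime (p i)) (hne : (s : Set ι).Pairwise fun i j => ¬ p i ∣ p j)
    (hN : ∀ i ∈ s, p i ∣ N) : ∏ i ∈ s, p i ∣ N := by
  classical
  induction s using Finset.induction_on with
  | empty => simp
  | insert a s ha ih =>
    simp only [forall_mem_insert, coe_insert] at hp hne hN
    obtain ⟨q, rfl⟩ := ih hp.2 (hne.mono (Set.subset_insert _ _)) hN.2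
    have not_dvd : ¬ p a ∣ ∏ i ∈ s, p i := fun h => by
      obtain ⟨i, hi, hdvd⟩ := hp.1.exists_mem_finset_dvd h
      exact hne (Set.mem_insert _ _) (Set.mem_insert_of_mem _ hi) (by grind) hdvd
    rw [prod_insert ha, mul_comm]
    exact mul_dvd_mul_left _ ((hp.1.dvd_or_dvd hN.1).resolve_left not_dvd)

variable {n : ℕ}

/-- The substitution `xᵢ ↦ xⱼ`, the other variables being kept. -/
def subst (i j : Fin n) : R n →+* R n := evalAt (update unitX i (unitX j))

lemma subst_X (i j l : Fin n) : subst i j (X l) = X (if l = i then j else l) := by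
  rw [subst, evalAt_X, update_apply]
  split_ifs <;> rfl

lemma X_sub_X_dvd_iff {i j : Fin n} {f : R n} : X j - X i ∣ f ↔ subst i j f = 0 := by
  constructor
  · rintro ⟨q, rfl⟩
    simp [subst_X]
  · intro hf
    rw [← Ideal.mem_span_singleton, ← Ideal.Quotient.eq_zero_iff_mem]
    have h : (Ideal.Quotient.mk (Ideal.span {X j - X i})).comp (subst i j) =
        Ideal.Quotient.mk (Ideal.span {X j - X i}) := laurent_ringHom_ext fun l => by
      rw [RingHom.comp_apply, subst_X]
      split_ifs with hl
      · exact hl ▸ Ideal.Quotient.eq.mpr (Ideal.mem_span_singleton_self _)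
      · rfl
    rw [← h, RingHom.comp_apply, hf, map_zero]

lemma prime_X_sub_X {i j : Fin n} (h : i ≠ j) : Prime (X j - X i : R n) := by
  refine ⟨sub_ne_zero.mpr (X_injective.ne h.symm), fun hu => ?_, fun f g hfg => ?_⟩
  · simpa using X_sub_X_dvd_iff.mp (hu.dvd (a := 1))
  · rwa [X_sub_X_dvd_iff, map_mul, mul_eq_zero, ← X_sub_X_dvd_iff, ← X_sub_X_dvd_iff] at hfg

lemma prod_X_sub_X_dvd {s : Finset (Fin n × Fin n)} (hs : ∀ p ∈ s, p.swap ∉ s) {N : R n}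
    (hN : ∀ p ∈ s, X p.2 - X p.1 ∣ N) : ∏ p ∈ s, (X p.2 - X p.1) ∣ N := by
  have fst_ne_snd (p) (hp : p ∈ s) : p.1 ≠ p.2 := fun h =>
    hs p hp (by rwa [show p.swap = p from Prod.ext h.symm h])
  refine prod_dvd_of_prime (fun p hp => prime_X_sub_X (fst_ne_snd p hp))
    (fun p hp q hq hpq hdvd => ?_) hN
  have := fst_ne_snd q hq
  have := hs p hp
  rw [X_sub_X_dvd_iff, map_sub, sub_eq_zero, subst_X, subst_X, X_injective.eq_iff] at hdvd
  grind [Prod.ext_iff]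

/-- The Vandermonde determinant `∏_{i < j} (xⱼ - xᵢ)` of the variables. -/
def vandermondeX (n : ℕ) : R n := (Matrix.vandermonde X).det

lemma map_vandermondeX {B : Type*} [CommRing B] (φ : R n →+* B) :
    φ (vandermondeX n) = (Matrix.vandermonde fun i => φ (X i)).det := by
  simp [vandermondeX, Matrix.det_vandermonde]

lemma X_sub_X_dvd_vandermondeX {i j : Fin n} (h : i ≠ j) : X j - X i ∣ vandermondeX n := by
  rw [X_sub_X_dvd_iff, map_vandermondeX, Matrix.det_vandermonde_eq_zero_iff]
  exact ⟨i, j, by simp [subst_X], h⟩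

lemma permHom_vandermondeX (w : Equiv.Perm (Fin n)) :
    permHom w (vandermondeX n) = Equiv.Perm.sign w * vandermondeX n := by
  rw [map_vandermondeX]
  simp_rw [permHom_X]
  exact Matrix.det_permute w (Matrix.vandermonde X)

lemma vandermondeX_dvd {N : R n} (hN : ∀ w : Equiv.Perm (Fin n),
    permHom w N = Equiv.Perm.sign w * N) : vandermondeX n ∣ N := by
  rw [vandermondeX, Matrix.det_vandermonde, ← Finset.prod_finset_product'
    (univ.filter fun p : Fin n × Fin n => p.1 < p.2) univ (fun i => Ioi i) (by simp)]
  refine prod_X_sub_X_dvd (by grind) fun p hp => X_sub_X_dvd_iff.mpr ?_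
  have subst_comp_swap : (subst p.1 p.2).comp (permHom (Equiv.swap p.1 p.2)) = subst p.1 p.2 :=
    laurent_ringHom_ext fun l => by
      rw [RingHom.comp_apply, permHom_X, subst_X, subst_X]
      grind
  have eq_neg := congr($subst_comp_swap N).symm
  rw [RingHom.comp_apply, hN, Equiv.Perm.sign_swap (mem_filter.mp hp).2.ne] at eq_neg
  have : CharZero (R n) := (evalAt fun _ : Fin n => (1 : ℤˣ)).charZero
  exact CharZero.eq_neg_self_iff.mp (by simpa using eq_neg)

/-- The common denominator `∏_{i ∉ I, j ∈ I} (xⱼ - xᵢ)` of the `I`-th term of a symmetrization. -/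
def crossDiff (I : Finset (Fin n)) : R n := ∏ p ∈ Iᶜ ×ˢ I, (X p.2 - X p.1)

lemma crossDiff_dvd_vandermondeX (I : Finset (Fin n)) : crossDiff I ∣ vandermondeX n :=
  prod_X_sub_X_dvd (by grind [mem_compl]) fun p hp =>
    X_sub_X_dvd_vandermondeX (by grind [mem_compl])

end Divisibility

section Symmetrization

variable {n : ℕ} {K : Type} [Field K] {φ : R n →+* K} {h : Finset (Fin n) → R n}

lemma map_X_injective_comp_permHom (hφ : Injective fun i => φ (X i)) (w : Equiv.Perm (Fin n)) :
    Injective fun i => φ.comp (permHom w) (X i) := by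
  simp only [RingHom.comp_apply, permHom_X]
  exact hφ.comp w.injective

lemma map_vandermondeX_ne_zero (hφ : Injective fun i => φ (X i)) : φ (vandermondeX n) ≠ 0 := by
  rwa [map_vandermondeX, Matrix.det_vandermonde_ne_zero_iff]

lemma permHom_crossDiff (w : Equiv.Perm (Fin n)) (I : Finset (Fin n)) :
    permHom w (crossDiff I) = crossDiff (I.map w.toEmbedding) := by
  rw [crossDiff, crossDiff, map_prod]
  exact prod_equiv (w.prodCongr w) (by simp) (by simp [permHom_X])

/-- The family `h` of numerators is equivariant: permuting the variables of `h I` by `w` gives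
`h (w I)`. -/
def Equivariant (h : Finset (Fin n) → R n) : Prop :=
  ∀ w I, permHom w (h I) = h (I.map w.toEmbedding)

/-- The sum `∑_I h_I / ∏_{i ∉ I, j ∈ I} (xⱼ - xᵢ)`, evaluated in a field through `φ`. -/
def fractionSum (h : Finset (Fin n) → R n) (φ : R n →+* K) : K :=
  ∑ I, φ (h I) / φ (crossDiff I)

lemma fractionSum_comp_permHom (hh : Equivariant h) (φ : R n →+* K) (w : Equiv.Perm (Fin n)) :
    fractionSum h (φ.comp (permHom w)) = fractionSum h φ := by
  refine Fintype.sum_equiv (Equiv.finsetCongr w) _ _ fun I => ?_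
  rw [RingHom.comp_apply, RingHom.comp_apply, hh, permHom_crossDiff, Equiv.finsetCongr_apply]

lemma exists_map_eq_vandermondeX_mul_fractionSum (h : Finset (Fin n) → R n) :
    ∃ N : R n, ∀ {K : Type} [Field K] {φ : R n →+* K}, (Injective fun i => φ (X i)) →
      φ N = φ (vandermondeX n) * fractionSum h φ := by
  choose d hd using fun I : Finset (Fin n) => crossDiff_dvd_vandermondeX I
  refine ⟨∑ I, h I * d I, fun {K} _ φ hφ => ?_⟩
  rw [map_sum, fractionSum, mul_sum]
  refine sum_congr rfl fun I _ => ?_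
  have hV := map_vandermondeX_ne_zero hφ
  rw [hd I, map_mul] at hV ⊢
  have := left_ne_zero_of_mul hV
  rw [map_mul]
  field_simp

theorem exists_symmP_map_eq_fractionSum (hh : Equivariant h) :
    ∃ f : R n, SymmP f ∧ ∀ {K : Type} [Field K] {φ : R n →+* K}, (Injective fun i => φ (X i)) →
      φ f = fractionSum h φ := by
  obtain ⟨N, hN⟩ := exists_map_eq_vandermondeX_mul_fractionSum h
  let ι := algebraMap (R n) (FractionRing (R n))
  have ι_injective : Injective ι := IsFractionRing.injective _ _
  have ι_X_injective : Injective fun i => ι (X i) := ι_injective.comp X_injective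
  obtain ⟨f, rfl⟩ : vandermondeX n ∣ N := vandermondeX_dvd fun w => ι_injective <| by
    change (ι.comp (permHom w)) N = _
    rw [hN (map_X_injective_comp_permHom ι_X_injective w), fractionSum_comp_permHom hh,
      RingHom.comp_apply, permHom_vandermondeX, map_mul, map_mul, hN ι_X_injective, mul_assoc]
  have map_f {K : Type} [Field K] {φ : R n →+* K} (hφ : Injective fun i => φ (X i)) :
      φ f = fractionSum h φ :=
    mul_left_cancel₀ (map_vandermondeX_ne_zero hφ) ((map_mul φ _ _).symm.trans (hN hφ))
  refine ⟨f, fun w => ι_injective ?_, map_f⟩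
  change (ι.comp (permHom w)) f = ι f
  rw [map_f (map_X_injective_comp_permHom ι_X_injective w), fractionSum_comp_permHom hh,
    map_f ι_X_injective]

end Symmetrization

section AlternatingSum

/-- The sign of the subsets of cardinality `m` in an alternating sum over the nonempty subsets of
even cardinality: `0, 0, 1, 0, -1, 0, 1, …`. -/
def altSign : ℕ → ℤ
  | 0 | 1 => 0
  | 2 => 1
  | m + 3 => -altSign (m + 1)

lemma altSign_add_two {m : ℕ} (hm : m ≠ 0) : altSign (m + 2) = -altSign m := by
  obtain ⟨l, rfl⟩ := Nat.exists_eq_succ_of_ne_zero hm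
  rfl

lemma altSign_of_lt_two {m : ℕ} (hm : m < 2) : altSign m = 0 := by
  interval_cases m <;> rfl

lemma sum_eq_sum_powerset_compl_pair {ι M : Type*} [Fintype ι] [DecidableEq ι] [AddCommMonoid M]
    {a b : ι} (hab : a ≠ b) (F : Finset ι → M) :
    ∑ I, F I = ∑ I ∈ ({a, b}ᶜ : Finset ι).powerset,
      (F I + F (insert b I) + (F (insert a I) + F (insert a (insert b I)))) := by
  have univ_eq : univ = insert a (insert b ({a, b}ᶜ : Finset ι)) := by ext; grind [mem_compl]
  rw [← powerset_univ, univ_eq, sum_powerset_insert (by simp [hab]),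
    sum_powerset_insert (by simp), sum_powerset_insert (by simp)]
  simp only [sum_add_distrib]

variable {ι K : Type*} [Fintype ι] [DecidableEq ι] [Field K]

/-- The weight `∏_{i ∉ I, j ∈ I} (1 - vᵢ vⱼ) / (vⱼ - vᵢ)` of a subset `I` of the index set. -/
def crossWeight (v : ι → K) (I : Finset ι) : K :=
  ∏ p ∈ Iᶜ ×ˢ I, (1 - v p.1 * v p.2) / (v p.2 - v p.1)

variable {v : ι → K} {a b : ι} {I : Finset ι}

lemma crossWeight_eq_zero (hab : v a * v b = 1) (ha : a ∉ I) (hb : b ∈ I) :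
    crossWeight v I = 0 :=
  prod_eq_zero (i := (a, b)) (by simp [ha, hb]) (by simp [hab])

lemma crossFactor_mul_crossFactor {x y z : K} (hxy : x * y = 1) (hx : z ≠ x) (hy : z ≠ y) :
    (1 - x * z) / (z - x) * ((1 - y * z) / (z - y)) = 1 := by
  have := sub_ne_zero.mpr hx
  have := sub_ne_zero.mpr hy
  field_simp
  linear_combination (z ^ 2 - 1) * hxy

lemma crossWeight_insert_insert (hv : Injective v) (hne : a ≠ b) (hab : v a * v b = 1)
    (ha : a ∉ I) (hb : b ∉ I) : crossWeight v (insert a (insert b I)) = crossWeight v I := by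
  set c : ι → ι → K := fun i j => (1 - v i * v j) / (v j - v i) with hc
  have c_left (j : ι) (hja : j ≠ a) (hjb : j ≠ b) : c a j * c b j = 1 :=
    crossFactor_mul_crossFactor hab (hv.ne hja) (hv.ne hjb)
  have c_right (i : ι) (hia : i ≠ a) (hib : i ≠ b) : c i a * c i b = 1 := by
    rw [← c_left i hia hib]
    simp only [hc, ← neg_sub (v i), div_neg, neg_mul_neg, mul_comm]
  have compl_eq : Iᶜ = insert a (insert b (insert a (insert b I))ᶜ) := by ext; grind [mem_compl]
  have prod_rows : ∏ j ∈ I, c a j * c b j = 1 :=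
    prod_eq_one fun j hj => c_left j (by grind) (by grind)
  have prod_columns (i) (hi : i ∈ (insert a (insert b I))ᶜ) :
      ∏ j ∈ insert a (insert b I), c i j = ∏ j ∈ I, c i j := by
    simp only [mem_compl, mem_insert, not_or] at hi
    rw [prod_insert (by simp [hne, ha]), prod_insert hb, ← mul_assoc, c_right i hi.1 hi.2.1,
      one_mul]
  rw [crossWeight, crossWeight, prod_product, prod_product, prod_congr rfl prod_columns, compl_eq,
    prod_insert (by simp [hne]), prod_insert (by simp), ← mul_assoc, ← prod_mul_distrib, prod_rows,
    one_mul]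

lemma sum_altSign_mul_crossWeight (hv : Injective v) (hne : a ≠ b) (hab : v a * v b = 1)
    {G : Finset ι → K}
    (hG : ∀ I, a ∉ I → b ∉ I → 2 ≤ #I → G (insert a (insert b I)) = G I) :
    ∑ I, altSign #I * G I * crossWeight v I = G {a, b} := by
  have weight_insert_a {I : Finset ι} (hb : b ∉ I) : crossWeight v (insert a I) = 0 :=
    crossWeight_eq_zero (mul_comm (v a) _ ▸ hab) (by simp [hne.symm, hb]) (mem_insert_self _ _)
  have weight_insert_b {I : Finset ι} (ha : a ∉ I) : crossWeight v (insert b I) = 0 :=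
    crossWeight_eq_zero hab (by simp [hne, ha]) (mem_insert_self _ _)
  have terms_cancel {I : Finset ι} (ha : a ∉ I) (hb : b ∉ I) (hI : I ≠ ∅) :
      altSign #I * G I + altSign #(insert a (insert b I)) * G (insert a (insert b I)) = 0 := by
    rw [card_insert_of_notMem (by simp [hne, ha]), card_insert_of_notMem hb,
      altSign_add_two (card_ne_zero.mpr (nonempty_iff_ne_empty.mpr hI))]
    rcases lt_or_ge #I 2 with h | h
    · simp [altSign_of_lt_two h]
    · simp [hG I ha hb h]
  rw [sum_eq_sum_powerset_compl_pair hne, sum_eq_single ∅]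
  · rw [weight_insert_a (notMem_empty b), weight_insert_b (notMem_empty a),
      crossWeight_insert_insert hv hne hab (notMem_empty a) (notMem_empty b)]
    simp [crossWeight, altSign, card_pair hne]
  · intro I hI hI_ne
    have ha : a ∉ I := fun h => by simpa using mem_powerset.mp hI h
    have hb : b ∉ I := fun h => by simpa using mem_powerset.mp hI h
    rw [weight_insert_a hb, weight_insert_b ha, crossWeight_insert_insert hv hne hab ha hb]
    linear_combination crossWeight v I * terms_cancel ha hb hI_ne
  · simp

end AlternatingSum

section Lifting

variable {k : ℕ} {g : R k} {a b : Fin (k + 2)} {K : Type} [Field K]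

/-- The numerator `±g(x_{Iᶜ}, 1, …, 1) ∏_{i ∉ I, j ∈ I} (1 - xᵢ xⱼ)` of the `I`-th term of the
symmetric Laurent polynomial lifting `g` through `ds (k + 2)`. -/
def liftNumerator (g : R k) (I : Finset (Fin (k + 2))) : R (k + 2) :=
  altSign #I * padEval g (Iᶜ.val.map unitX) * ∏ p ∈ Iᶜ ×ˢ I, (1 - X p.1 * X p.2)

lemma map_altSign_mul_padEval {B C : Type*} [CommRing B] [CommRing C] (hg : SymmP g) (φ : B →+* C)
    (v : Fin (k + 2) → Bˣ) (I : Finset (Fin (k + 2))) :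
    φ (altSign #I * padEval g (Iᶜ.val.map v)) =
      altSign #I * padEval g (Iᶜ.val.map (Units.map (φ : B →* C) ∘ v)) := by
  rcases lt_or_ge #I 2 with h | h
  · simp [altSign_of_lt_two h]
  · have hcard : (Iᶜ.val.map v).card ≤ k := by
      rw [Multiset.card_map, card_val, card_compl, Fintype.card_fin]
      omega
    rw [map_mul, map_intCast, map_padEval hg φ hcard, Multiset.map_map]

lemma equivariant_liftNumerator (hg : SymmP g) : Equivariant (liftNumerator g) := by
  intro w I
  have unitX_perm : Units.map (permHom w : R (k + 2) →* R (k + 2)) ∘ unitX = unitX ∘ w :=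
    funext fun i => Units.ext (permHom_X w i)
  have compl_map : (I.map w.toEmbedding)ᶜ = Iᶜ.map w.toEmbedding := by
    ext i
    simp
  rw [liftNumerator, liftNumerator, map_mul, map_altSign_mul_padEval hg, unitX_perm, card_map,
    compl_map, map_val, Multiset.map_map, map_prod]
  congr 1
  exact prod_equiv (w.prodCongr w) (by simp) (by simp [permHom_X])

lemma val_compl_eq_cons_cons {α : Type*} [Fintype α] [DecidableEq α] {a b : α} (hne : a ≠ b)
    {I : Finset α} (ha : a ∉ I) (hb : b ∉ I) :
    Iᶜ.val = a ::ₘ b ::ₘ (insert a (insert b I))ᶜ.val := by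
  have compl_eq : Iᶜ = cons a (cons b (insert a (insert b I))ᶜ (by simp)) (by simp [hne]) := by
    ext i
    grind [mem_compl]
  rw [compl_eq, cons_val, cons_val]

lemma padEval_compl_insert_insert (hg : g ∈ J k) {v : Fin (k + 2) → Kˣ} (hne : a ≠ b)
    (hab : v b = (v a)⁻¹) {I : Finset (Fin (k + 2))} (ha : a ∉ I) (hb : b ∉ I) (hI : 2 ≤ #I) :
    (padEval g ((insert a (insert b I))ᶜ.val.map v) : K) = padEval g (Iᶜ.val.map v) := by
  have hcard : ((insert a (insert b I))ᶜ.val.map v).card + 2 ≤ k := by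
    have := card_compl I
    rw [card_def, val_compl_eq_cons_cons hne ha hb, Multiset.card_cons, Multiset.card_cons,
      Fintype.card_fin] at this
    rw [Multiset.card_map]
    omega
  rw [val_compl_eq_cons_cons hne ha hb, Multiset.map_cons, Multiset.map_cons, hab,
    padEval_cons_cons_inv hg hcard]

lemma fractionSum_liftNumerator (hg : g ∈ J k) {v : Fin (k + 2) → Kˣ} (hv : Injective v)
    (hne : a ≠ b) (hab : v b = (v a)⁻¹) :
    fractionSum (liftNumerator g) (evalAt v) = padEval g (({a, b} : Finset _)ᶜ.val.map v) := by
  have evalAt_unitX : Units.map (evalAt v : R (k + 2) →* K) ∘ unitX = v :=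
    funext fun i => Units.ext (evalAt_X v i)
  calc fractionSum (liftNumerator g) (evalAt v)
      = ∑ I, altSign #I * padEval g (Iᶜ.val.map v) * crossWeight (fun i => (v i : K)) I := by
        refine sum_congr rfl fun I _ => ?_
        rw [liftNumerator, map_mul, map_altSign_mul_padEval hg.1, evalAt_unitX, mul_div_assoc,
          crossWeight, crossDiff, map_prod, map_prod, ← prod_div_distrib]
        simp only [map_sub, map_one, map_mul, evalAt_X]
    _ = padEval g (({a, b} : Finset _)ᶜ.val.map v) :=
        sum_altSign_mul_crossWeight (Units.val_injective.comp hv) hne (by simp [hab])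
          (G := fun I => padEval g (Iᶜ.val.map v))
          fun _ => padEval_compl_insert_insert hg hne hab

lemma compl_pair_map_snocInvPair {G : Type*} [Inv G] (u : Fin k → G) (t : G) :
    ({(Fin.last k).castSucc, Fin.last (k + 1)} : Finset _)ᶜ.val.map (snocInvPair u t) =
      univ.val.map u := by
  have h := univ_map_snocInvPair u t
  rw [← compl_empty, val_compl_eq_cons_cons (Fin.castSucc_ne_last (Fin.last k)) (notMem_empty _)
    (notMem_empty _), Multiset.map_cons, Multiset.map_cons] at h
  simpa only [snocInvPair, Fin.snoc_castSucc, Fin.snoc_last, Multiset.cons_inj_right,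
    insert_empty_eq] using h

theorem exists_symmP_evRT_eq_incl (hg : g ∈ J k) :
    ∃ f : R (k + 2), SymmP f ∧ evRT k f = incl k g := by
  obtain ⟨f, hf, map_f⟩ := exists_symmP_map_eq_fractionSum (equivariant_liftNumerator hg.1)
  refine ⟨f, hf, ?_⟩
  let ι := algebraMap (RT k) (FractionRing (RT k))
  have ι_injective : Injective ι := IsFractionRing.injective _ _
  let u := Units.map (ι : RT k →* FractionRing (RT k)) ∘
    Units.map (incl k : R k →* RT k) ∘ unitX
  let t := Units.map (ι : RT k →* FractionRing (RT k)) (unitT k)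
  have ι_evUnits : Units.map (ι : RT k →* FractionRing (RT k)) ∘ evUnits k = snocInvPair u t :=
    comp_snocInvPair _ _ _
  have snocInvPair_injective : Injective (snocInvPair u t) :=
    ι_evUnits ▸ (Units.map_injective ι_injective).comp evUnits_injective
  apply ι_injective
  calc ι (evRT k f) = evalAt (snocInvPair u t) f := by
        rw [← RingHom.comp_apply, evRT_eq_evalAt, comp_evalAt, ι_evUnits]
    _ = fractionSum (liftNumerator g) (evalAt (snocInvPair u t)) :=
        map_f (by simpa using! Units.val_injective.comp snocInvPair_injective)
    _ = padEval g (({(Fin.last k).castSucc, Fin.last (k + 1)} : Finset _)ᶜ.val.map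
          (snocInvPair u t)) :=
        fractionSum_liftNumerator hg snocInvPair_injective (Fin.castSucc_ne_last _)
          (by simp [snocInvPair])
    _ = evalAt u g := by rw [compl_pair_map_snocInvPair, padEval_univ_map hg.1]
    _ = ι (incl k g) := by rw [← comp_evalAt, evalAt_map_unitX, RingHom.comp_apply]

end Lifting

end DufloSerganova

/-- For every `n ≥ 2`, the map `dsₙ : Jₙ → J_{n-2}` is
surjective: every `g ∈ J_{n-2}` is `dsₙ f` for some `f ∈ Jₙ`. -/
theorem ds_surjective (n : ℕ) (hn : 2 ≤ n) :
    ∀ g ∈ J (n - 2), ∃ f ∈ J n, ds n f = g := by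
  obtain ⟨k, rfl⟩ : ∃ k, n = k + 2 := ⟨n - 2, by omega⟩
  intro g hg
  obtain ⟨f, hf, hev⟩ := DufloSerganova.exists_symmP_evRT_eq_incl hg
  exact ⟨f, ⟨hf, fun _ => ⟨g, hev.symm⟩⟩, DufloSerganova.ds_eq_of_evRT_eq_incl hev⟩

end
end

section
/- Let n ≥ 2 and let f ∈ R_n^{S_n} be a symmetric Laurent polynomial that is divisible in R_n by 1 − x_{n−1} x_n. Then f is divisible in R_n by ∏_{1 ≤ i < j ≤ n} (1 − x_i x_j), and the quotient g with f = (∏_{1 ≤ i < j ≤ n} (1 − x_i x_j)) · g is again a symmetric Laurent polynomial, g ∈ R_n^{S_n}. -/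
/-!
Common setup: `R n` is the ring of Laurent polynomials
`ℤ[x₁^{±1}, …, xₙ^{±1}]`, realized as the group algebra over `ℤ` of the
group `ℤ^n` of exponent vectors (`AddMonoidAlgebra ℤ (Fin n → ℤ)`).
-/

noncomputable section

/-!
Killing the exponent `e_i + e_j` with `i ≠ j`, that is, substituting `x_j = x_i⁻¹`, maps the Laurent
polynomials to a domain, and the kernel is generated by `1 - x_i x_j`; so `1 - x_i x_j` is prime. It
divides `1 - x_k x_l` only if `e_k + e_l` is a multiple of `e_i + e_j`, i.e. `{k, l} = {i, j}`. As
the symmetric group is transitive on pairs of distinct indices, a symmetric `f` divisible by one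
of these primes is divisible by all of them, hence by their product; the product is symmetric, and
cancelling it shows that the quotient is symmetric too.
-/

section PrimeProduct

variable {ι M : Type*} [CommMonoidWithZero M]

theorem prod_dvd_of_pairwise_prime_not_dvd {s : Finset ι} {p : ι → M} {a : M}
    (hprime : ∀ i ∈ s, Prime (p i)) (hpair : (s : Set ι).Pairwise fun i j => ¬ p i ∣ p j)
    (hdvd : ∀ i ∈ s, p i ∣ a) : ∏ i ∈ s, p i ∣ a := by
  classical
  induction s using Finset.induction_on with
  | empty => simp
  | insert i s his ih =>
    simp only [Finset.forall_mem_insert] at hprime hdvd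
    rw [Finset.coe_insert, Set.pairwise_insert] at hpair
    obtain ⟨b, rfl⟩ := ih hprime.2 hpair.1 hdvd.2
    have not_dvd_prod : ¬ p i ∣ ∏ j ∈ s, p j :=
      hprime.1.not_dvd_finsetProd fun j hj =>
        (hpair.2 j hj (ne_of_mem_of_not_mem hj his).symm).1
    rw [Finset.prod_insert his, mul_comm]
    exact mul_dvd_mul_left _ ((hprime.1.dvd_or_dvd hdvd.1).resolve_left not_dvd_prod)

end PrimeProduct

section SymmetricProduct

variable {ι M : Type*} [Fintype ι] [LinearOrder ι] [CommMonoid M]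

theorem prod_lt_eq_prod_sym2 (F : {F : ι → ι → M // ∀ i j, F i j = F j i}) :
    ∏ p : ι × ι with p.1 < p.2, F.1 p.1 p.2 = ∏ z : Sym2 ι with ¬ z.IsDiag, Sym2.lift F z := by
  have offDiag_lt : (Finset.univ.offDiag.filter fun p : ι × ι => p.1 < p.2) =
      Finset.univ.filter fun p => p.1 < p.2 := by
    ext p
    simpa using ne_of_lt
  rw [← Finset.sym2_univ, ← offDiag_lt]
  exact (Finset.sum_sym2_filter_not_isDiag (M := Additive M) Finset.univ (Sym2.lift F)).symm

theorem prod_lt_comp_perm {F : ι → ι → M} (hF : ∀ i j, F i j = F j i) (w : Equiv.Perm ι) :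
    ∏ p : ι × ι with p.1 < p.2, F (w p.1) (w p.2) = ∏ p : ι × ι with p.1 < p.2, F p.1 p.2 := by
  rw [prod_lt_eq_prod_sym2 ⟨fun i j => F (w i) (w j), fun _ _ => hF _ _⟩,
    prod_lt_eq_prod_sym2 ⟨F, hF⟩]
  refine Finset.prod_bijective (Sym2.map w)
    (Finite.injective_iff_bijective.mp (Sym2.map.injective w.injective)) (fun z => ?_)
    fun z _ => ?_
  · simp [Sym2.isDiag_map w.injective]
  · induction z with | _ i j => rfl

end SymmetricProduct

section GroupAlgebra

open AddMonoidAlgebra AddSubgroup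

theorem one_sub_single_eq_zero_iff {A M : Type*} [Ring A] [Nontrivial A] [Zero M] {m : M} :
    (1 - single m 1 : A[M]) = 0 ↔ m = 0 := by
  rw [sub_eq_zero, one_def, (single_left_injective (one_ne_zero (α := A))).eq_iff, eq_comm]

variable {A G H : Type*} [CommRing A] [AddCommGroup G] {v w : G}

theorem one_sub_single_dvd_of_mem_zmultiples (hw : w ∈ zmultiples v) :
    (1 - single v 1 : A[G]) ∣ 1 - single w 1 := by
  have dvd_add_iff (m : G) :
      (1 - single v 1 : A[G]) ∣ 1 - single (m + v) 1 ↔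
        (1 - single v 1 : A[G]) ∣ 1 - single m 1 := by
    have : 1 - single (m + v) 1 = (1 - single m 1 + single m 1 * (1 - single v 1) : A[G]) := by
      simp [mul_sub, single_mul_single]
    rw [this, dvd_add_left (dvd_mul_left _ _)]
  rw [mem_zmultiples_iff] at hw
  obtain ⟨k, rfl⟩ := hw
  induction k with
  | zero => simp [one_def]
  | succ k ih => rwa [add_zsmul, one_zsmul, dvd_add_iff]
  | pred k ih => rwa [← dvd_add_iff, ← add_one_zsmul, sub_add_cancel]

theorem ker_mapDomainRingHom_eq_span [AddMonoid H] {e : G →+ H} (he : e.ker = zmultiples v) :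
    RingHom.ker (mapDomainRingHom A e) = Ideal.span {1 - single v 1} := by
  have e_v : e v = 0 := e.mem_ker.mp (he ▸ mem_zmultiples v)
  refine le_antisymm (fun f hf => Ideal.mem_span_singleton.mpr ?_) ?_
  -- With a section `s` of `e`, replacing each `x^m` by `x^(s (e m))` does not change `f` modulo
  -- `1 - x^v`, and factors through `mapDomain e`.
  · let s : H → G := Function.invFun e
    have s_spec (m : G) : e (s (e m)) = e m := Function.invFun_eq ⟨m, rfl⟩
    have dvd_sub (g : A[G]) : 1 - single v 1 ∣ g - mapDomain s (mapDomain e g) := by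
      induction g using AddMonoidAlgebra.induction_linear with
      | zero => simp
      | add g h hg hh => simpa only [mapDomain_add, add_sub_add_comm] using dvd_add hg hh
      | single m c =>
        have mem : s (e m) - m ∈ zmultiples v := by
          rw [← he, sub_eq_neg_add, ← e.eq_iff, s_spec]
        have := (one_sub_single_dvd_of_mem_zmultiples (A := A) mem).mul_left (single m c)
        simpa [mul_sub, single_mul_single] using this
    have map_f : mapDomain e f = 0 := hf
    simpa only [map_f, mapDomain_zero, sub_zero] using dvd_sub f
  · rw [Ideal.span_singleton_le_iff_mem, RingHom.mem_ker, map_sub, map_one,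
      mapDomainRingHom_apply, mapDomain_single, e_v, one_def, sub_self]

theorem one_sub_single_dvd_one_sub_single_iff [Nontrivial A] :
    (1 - single v 1 : A[G]) ∣ 1 - single w 1 ↔ w ∈ zmultiples v := by
  refine ⟨fun h => ?_, one_sub_single_dvd_of_mem_zmultiples⟩
  rw [← Ideal.mem_span_singleton,
    ← ker_mapDomainRingHom_eq_span (QuotientAddGroup.ker_mk' (zmultiples v)), RingHom.mem_ker,
    map_sub, map_one, mapDomainRingHom_apply, mapDomain_single, one_sub_single_eq_zero_iff] at h
  exact (QuotientAddGroup.eq_zero_iff w).mp h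

theorem ker_id_sub_zmultiplesHom_comp {φ : G →+ ℤ} (hφ : φ v = 1) :
    (AddMonoidHom.id G - (zmultiplesHom G v).comp φ).ker = zmultiples v := by
  ext m
  simp only [AddMonoidHom.mem_ker, AddMonoidHom.sub_apply, AddMonoidHom.id_apply,
    AddMonoidHom.comp_apply, zmultiplesHom_apply, mem_zmultiples_iff, sub_eq_zero]
  refine ⟨fun h => ⟨φ m, h.symm⟩, ?_⟩
  rintro ⟨k, rfl⟩
  rw [map_zsmul, hφ, smul_eq_mul, mul_one]

theorem prime_one_sub_single [IsDomain A] [UniqueSums G] {φ : G →+ ℤ} (hφ : φ v = 1) :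
    Prime (1 - single v 1 : A[G]) := by
  have v_ne_zero : v ≠ 0 := by
    rintro rfl
    simp at hφ
  rw [← Ideal.span_singleton_prime (one_sub_single_eq_zero_iff.not.mpr v_ne_zero),
    ← ker_mapDomainRingHom_eq_span (ker_id_sub_zmultiplesHom_comp hφ)]
  exact RingHom.ker_isPrime _

end GroupAlgebra

theorem single_add_single_mem_zmultiples_iff {ι : Type*} [DecidableEq ι] {i j k l : ι} :
    (Pi.single k 1 + Pi.single l 1 : ι → ℤ) ∈
      AddSubgroup.zmultiples (Pi.single i 1 + Pi.single j 1) ↔ s(i, j) = s(k, l) := by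
  rw [AddSubgroup.mem_zmultiples_iff, Sym2.eq_iff]
  refine ⟨?_, ?_⟩
  · rintro ⟨c, hc⟩
    have coord (m : ι) := congrFun hc m
    simp only [Pi.smul_apply, Pi.add_apply, Pi.single_apply, smul_eq_mul] at coord
    have hi := coord i
    have hj := coord j
    have hk := coord k
    have hl := coord l
    -- If `i ∉ {k, l}`, the `i`-coordinate forces `c = 0`, which contradicts the `k`-coordinate;
    -- likewise for `j`. Conversely the left-hand side vanishes at `k` or `l` outside `{i, j}`.
    grind
  · rintro (⟨rfl, rfl⟩ | ⟨rfl, rfl⟩)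
    · exact ⟨1, one_zsmul _⟩
    · exact ⟨1, by rw [one_zsmul, add_comm]⟩

/-- Laurent polynomials over `A` in the variables indexed by `ι`; the intended `ι` are finite, as
exponent vectors are not required to have finite support. -/
abbrev MvLaurent (ι A : Type*) [CommRing A] : Type _ := AddMonoidAlgebra A (ι → ℤ)

namespace MvLaurent

open AddMonoidAlgebra AddSubgroup

section Variables

variable {ι A : Type*} [DecidableEq ι] [CommRing A]

/-- The variable `x_i`, encoded by its exponent vector. -/
def var (i : ι) : MvLaurent ι A := single (Pi.single i 1) 1

theorem one_sub_var_mul_var (i j : ι) :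
    (1 - var i * var j : MvLaurent ι A) = 1 - single (Pi.single i 1 + Pi.single j 1) 1 := by
  rw [var, var, single_mul_single, one_mul]

theorem prime_one_sub_var_mul_var [IsDomain A] {i j : ι} (hij : i ≠ j) :
    Prime (1 - var i * var j : MvLaurent ι A) := by
  rw [one_sub_var_mul_var]
  exact prime_one_sub_single (φ := Pi.evalAddMonoidHom (fun _ => ℤ) i) (by simp [hij])

theorem one_sub_var_mul_var_dvd_iff [Nontrivial A] {i j k l : ι} :
    (1 - var i * var j : MvLaurent ι A) ∣ 1 - var k * var l ↔ s(i, j) = s(k, l) := by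
  rw [one_sub_var_mul_var, one_sub_var_mul_var, one_sub_single_dvd_one_sub_single_iff,
    single_add_single_mem_zmultiples_iff]

end Variables

section Symmetric

variable {ι A : Type*} [CommRing A]

/-- The action of a permutation of the indices on Laurent polynomials, `x_i ↦ x_{w i}`. -/
def rename (w : Equiv.Perm ι) : MvLaurent ι A →+* MvLaurent ι A :=
  mapDomainRingHom A (AddMonoidHom.mk' (fun m : ι → ℤ => m ∘ w.symm) fun _ _ => rfl)

/-- Invariance of a Laurent polynomial under all permutations of the variables. -/
def IsSymmetric (f : MvLaurent ι A) : Prop := ∀ w : Equiv.Perm ι, rename w f = f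

theorem IsSymmetric.of_mul_left [IsDomain A] {f g : MvLaurent ι A} (hf : f ≠ 0)
    (hf_symm : IsSymmetric f) (hfg : IsSymmetric (f * g)) : IsSymmetric g := fun w =>
  mul_left_cancel₀ hf <| by simpa only [map_mul, hf_symm w] using hfg w

variable [DecidableEq ι]

theorem rename_var (w : Equiv.Perm ι) (i : ι) :
    rename w (var i : MvLaurent ι A) = var (w i) := by
  have : (Pi.single i (1 : ℤ) : ι → ℤ) ∘ w.symm = Pi.single (w i) 1 := by
    ext k
    simp [Pi.single_apply, Equiv.symm_apply_eq]
  simp only [rename, var, mapDomainRingHom_apply, mapDomain_single, AddMonoidHom.mk'_apply, this]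

theorem rename_one_sub_var_mul_var (w : Equiv.Perm ι) (i j : ι) :
    rename w (1 - var i * var j : MvLaurent ι A) = 1 - var (w i) * var (w j) := by
  rw [map_sub, map_one, map_mul, rename_var, rename_var]

theorem IsSymmetric.one_sub_var_mul_var_dvd {f : MvLaurent ι A} (hf : IsSymmetric f) {i j k l : ι}
    (hij : i ≠ j) (hkl : k ≠ l) (h : 1 - var i * var j ∣ f) : 1 - var k * var l ∣ f := by
  obtain ⟨w, rfl, rfl⟩ := MulAction.is_two_pretransitive_iff.mp
    (Equiv.Perm.isMultiplyPretransitive ι 2) hij hkl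
  simpa only [rename_one_sub_var_mul_var, hf w, Equiv.Perm.smul_def] using map_dvd (rename w) h

end Symmetric

section PairProduct

variable {ι A : Type*} [Fintype ι] [LinearOrder ι] [CommRing A]

variable (ι A) in
/-- The product `∏_{i < j} (1 - x_i x_j)`; the order on `ι` only serves to take each pair of
distinct indices once. -/
def pairProduct : MvLaurent ι A := ∏ p : ι × ι with p.1 < p.2, (1 - var p.1 * var p.2)

theorem isSymmetric_pairProduct : IsSymmetric (pairProduct ι A) := fun w => by
  simp only [pairProduct, map_prod, rename_one_sub_var_mul_var]
  exact prod_lt_comp_perm (F := fun i j => 1 - var i * var j)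
    (fun i j => congrArg (1 - ·) (mul_comm _ _)) w

theorem pairProduct_ne_zero [IsDomain A] : pairProduct ι A ≠ 0 :=
  Finset.prod_ne_zero_iff.mpr fun _ hp =>
    (prime_one_sub_var_mul_var (Finset.mem_filter.mp hp).2.ne).ne_zero

theorem pairProduct_dvd [IsDomain A] {f : MvLaurent ι A}
    (h : ∀ i j, i < j → 1 - var i * var j ∣ f) : pairProduct ι A ∣ f := by
  refine prod_dvd_of_pairwise_prime_not_dvd (fun p hp => ?_) (fun p hp q hq hpq => ?_)
    fun p hp => ?_
  · exact prime_one_sub_var_mul_var (Finset.mem_filter.mp hp).2.ne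
  · have hp_lt : p.1 < p.2 := by simpa using hp
    have hq_lt : q.1 < q.2 := by simpa using hq
    simp only [one_sub_var_mul_var_dvd_iff, Sym2.eq_iff]
    grind
  · exact h _ _ (Finset.mem_filter.mp hp).2

end PairProduct

end MvLaurent

open MvLaurent in
theorem dvd_of_symm_dvd_last_general {ι A : Type*} [Fintype ι] [LinearOrder ι] [CommRing A]
    [IsDomain A] {f : MvLaurent ι A} (hf : IsSymmetric f) {a b : ι} (hab : a ≠ b)
    (hdvd : 1 - var a * var b ∣ f) :
    ∃ g : MvLaurent ι A, IsSymmetric g ∧ f = pairProduct ι A * g := by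
  obtain ⟨g, rfl⟩ : pairProduct ι A ∣ f :=
    pairProduct_dvd fun i j hij => hf.one_sub_var_mul_var_dvd hab hij.ne hdvd
  exact ⟨g, isSymmetric_pairProduct.of_mul_left pairProduct_ne_zero hf, rfl⟩

/-- For `n ≥ 2`, if a symmetric Laurent polynomial `f` is
divisible in `Rₙ` by `1 - x_{n-1} xₙ` (the last two variables, `1`-indexed),
then `f = (∏_{1 ≤ i < j ≤ n} (1 - xᵢxⱼ)) ⬝ g` with `g` again a symmetric
Laurent polynomial. -/
theorem dvd_of_symm_dvd_last (n : ℕ) (hn : 2 ≤ n) (f : R n) (hf : SymmP f)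
    (hdvd : (1 - X (⟨n - 2, by omega⟩ : Fin n) * X (⟨n - 1, by omega⟩ : Fin n)) ∣ f) :
    ∃ g : R n, SymmP g ∧ f = P n * g :=
  dvd_of_symm_dvd_last_general hf (Fin.ne_of_val_ne (by grind)) hdvd

end
end

section
/- Let n, k be integers with 1 ≤ k and 2k ≤ n, and let a ∈ ℤ. In the field of fractions of R_n set F := (x_1 x_2 ⋯ x_{2k})^{a} · (∏_{1 ≤ i < j ≤ n, j > 2k} (1 − x_i x_j)) / (∏_{1 ≤ i < j ≤ n} (1 − x_i^{−1} x_j)) and E := ∑_{w ∈ S_n} w(F). Then E is a Laurent polynomial, i.e. E ∈ R_n; it is symmetric, E ∈ R_n^{S_n}; and moreover E ∈ J_n, i.e. ev_n(E) does not involve t. -/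
/-!
Common setup: `R n` is the ring of Laurent polynomials
`ℤ[x₁^{±1}, …, xₙ^{±1}]`, realized as the group algebra over `ℤ` of the
group `ℤ^n` of exponent vectors (`AddMonoidAlgebra ℤ (Fin n → ℤ)`).
-/

noncomputable section

/-- The numerator of `F`:
`(x₁x₂⋯x_{2k})^a ⬝ ∏_{1 ≤ i < j ≤ n, j > 2k} (1 - xᵢxⱼ)`, where the first
factor is the monomial with exponent `a` in each of the first `2k`
variables. -/
def numF (n k : ℕ) (a : ℤ) : R n :=
  AddMonoidAlgebra.single (fun i : Fin n => if (i : ℕ) < 2 * k then a else 0) (1 : ℤ) *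
    ∏ p ∈ Finset.univ.filter
        (fun p : Fin n × Fin n => p.1 < p.2 ∧ 2 * k ≤ (p.2 : ℕ)),
      (1 - X p.1 * X p.2)

/-- The denominator of `F`: `∏_{1 ≤ i < j ≤ n} (1 - xᵢ⁻¹ xⱼ)` (an element of
`Rₙ`, since `Rₙ` consists of Laurent polynomials). -/
def denF (n : ℕ) : R n :=
  ∏ p ∈ Finset.univ.filter (fun p : Fin n × Fin n => p.1 < p.2),
    (1 - Xinv p.1 * X p.2)

instance instIsDomainR (n : ℕ) : IsDomain (R n) := NoZeroDivisors.to_isDomain _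

/-!
Multiplied by a monomial, the denominator `∏_{i < j} (1 - xᵢ⁻¹ xⱼ)` becomes the Vandermonde
determinant in the `xᵢ⁻¹`, which divides every alternating sum of Laurent polynomials. So `E` is a
quotient of two alternating Laurent polynomials, hence a symmetric Laurent polynomial.

The permutations of `∏_{i < j} (1 - xᵢ⁻¹ xⱼ)⁻¹` sum to `1`. Applied to the first `m = 2k` variables
this gives `m! E = ∑_w w(G)` with
`G = (x₁⋯xₘ)^a ∏_{i < j, j > m} (1 - xᵢxⱼ) / (1 - xᵢ⁻¹xⱼ)`. Specialize `G` so that two of its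
variables, the `p`-th and the `q`-th with `p < q`, become inverse to each other. If `q > m`, then
`G` vanishes; if `q ≤ m`, their contributions cancel. Either way the value does not depend on those
two variables, so `evₙ E` is unchanged by `t ↦ t²`, which is only possible if `t` does not occur.
-/

section Vandermonde

open Matrix Polynomial
open Equiv.Perm (sign)

variable {B : Type*} [CommRing B] {n : ℕ}

theorem det_vandermonde_comp_perm (v : Fin n → B) (w : Equiv.Perm (Fin n)) :
    (vandermonde (v ∘ w)).det = (sign w : ℤ) * (vandermonde v).det := by
  rw [← det_permute]
  rfl

theorem intCast_units_mul_self (u : ℤˣ) : ((u : ℤ) : B) * ((u : ℤ) : B) = 1 := by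
  rw [← Int.cast_mul, Int.units_coe_mul_self, Int.cast_one]

/-- Modulo the monic polynomial `∏ i, (T - v i)` of degree `n`, each `p j` has a remainder of degree
less than `n` with the same values at the `v i`, so the matrix factors through `vandermonde v`. -/
theorem det_vandermonde_dvd_det_eval (v : Fin n → B) (p : Fin n → B[X]) :
    (vandermonde v).det ∣ (of fun i j => (p j).eval (v i)).det := by
  nontriviality B
  let Q := Lagrange.nodal Finset.univ v
  have hQ : Q.Monic := Lagrange.nodal_monic
  have eval_rem (i j : Fin n) : (p j).eval (v i) = (p j %ₘ Q).eval (v i) := by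
    conv_lhs => rw [← modByMonic_add_div (p j) Q]
    simp [Q, Lagrange.eval_nodal_at_node (Finset.mem_univ i)]
  have natDegree_rem_lt (i j : Fin n) : (p j %ₘ Q).natDegree < n := by
    have hdeg : Q.natDegree = n := by simp [Q, Lagrange.natDegree_nodal]
    have hQ1 : Q ≠ 1 := fun h => i.pos.ne (by rw [← hdeg, h, natDegree_one])
    exact hdeg ▸ natDegree_modByMonic_lt _ hQ hQ1
  have factor : (of fun i j => (p j).eval (v i)) =
      vandermonde v * of fun (i j : Fin n) => (p j %ₘ Q).coeff (i : ℕ) := by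
    ext i j
    rw [of_apply, eval_rem, eval_eq_sum_range' (natDegree_rem_lt i j), ← Fin.sum_univ_eq_sum_range
      (fun k => (p j %ₘ Q).coeff k * v i ^ k), mul_apply]
    exact Finset.sum_congr rfl fun k _ => mul_comm _ _
  exact ⟨_, by rw [factor, det_mul]⟩

theorem det_vandermonde_dvd_det_zpow (v : Fin n → Bˣ) (e : Fin n → ℤ) :
    (vandermonde fun i => (v i : B)).det ∣ (of fun i j => ((v i ^ e j : Bˣ) : B)).det := by
  obtain ⟨N, hN⟩ : ∃ N : ℕ, ∀ j, 0 ≤ N + e j := by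
    refine ⟨Finset.univ.sup fun j => (-e j).toNat, fun j => ?_⟩
    have := Finset.le_sup (f := fun j => (-e j).toNat) (Finset.mem_univ j)
    lia
  have shift : (∏ i, ((v i ^ N : Bˣ) : B)) * (of fun i j => ((v i ^ e j : Bˣ) : B)).det =
      (of fun i j => ((Polynomial.X ^ (N + e j).toNat : B[X])).eval (v i : B)).det := by
    rw [← det_mul_column]
    congr 1
    ext i j
    rw [of_apply, of_apply, of_apply, eval_pow, eval_X, ← Units.val_pow_eq_pow_val,
      ← Units.val_mul, ← zpow_natCast, ← zpow_natCast, ← _root_.zpow_add,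
      Int.toNat_of_nonneg (hN j)]
  rw [← Units.coe_prod] at shift
  rw [← (Units.isUnit _).dvd_mul_left, shift]
  exact det_vandermonde_dvd_det_eval _ _

end Vandermonde

section WeylDenominator

open Matrix
open Equiv.Perm (sign)

variable {K : Type*} [Field K] {n : ℕ}

/-- The Weyl denominator `∏_{i < j} (1 - yᵢ⁻¹ yⱼ)` of type `A`, at a point `y` with coordinates in
a field. -/
def weylDenominator (y : Fin n → K) : K :=
  ∏ j, ∏ i ∈ Finset.Iio j, (1 - (y i)⁻¹ * y j)

theorem weylDenominator_mul_prod_pow {y : Fin n → K} (hy : ∀ i, y i ≠ 0) :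
    weylDenominator y * ∏ j, (y j)⁻¹ ^ (j : ℕ) = (vandermonde y⁻¹).det := by
  have hswap : (vandermonde y⁻¹).det = ∏ j, ∏ i ∈ Finset.Iio j, ((y j)⁻¹ - (y i)⁻¹) := by
    rw [det_vandermonde]
    exact Finset.prod_comm' (by simp)
  rw [hswap, weylDenominator, ← Finset.prod_mul_distrib]
  refine Finset.prod_congr rfl fun j _ => ?_
  rw [← Fin.card_Iio j, ← Finset.prod_const, ← Finset.prod_mul_distrib]
  refine Finset.prod_congr rfl fun i _ => ?_
  rw [sub_mul, one_mul, mul_inv_cancel_right₀ (hy j)]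

theorem det_vandermonde_inv_ne_zero {y : Fin n → K} (hinj : Function.Injective y) :
    (vandermonde y⁻¹).det ≠ 0 :=
  det_vandermonde_ne_zero_iff.2 (inv_injective.comp hinj)

theorem inv_weylDenominator_comp_perm {y : Fin n → K} (hy : ∀ i, y i ≠ 0)
    (hinj : Function.Injective y) (w : Equiv.Perm (Fin n)) :
    (weylDenominator (y ∘ w))⁻¹ =
      (vandermonde y⁻¹).det⁻¹ * ((sign w : ℤ) * ∏ j, (y (w j))⁻¹ ^ (j : ℕ)) := by
  have hV := det_vandermonde_inv_ne_zero hinj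
  have hD : weylDenominator (y ∘ w) * ∏ j, (y (w j))⁻¹ ^ (j : ℕ) =
      (sign w : ℤ) * (vandermonde y⁻¹).det :=
    (weylDenominator_mul_prod_pow fun i => hy (w i)).trans (det_vandermonde_comp_perm y⁻¹ w)
  refine inv_eq_of_mul_eq_one_right ?_
  calc
    _ = (vandermonde y⁻¹).det⁻¹ * (sign w : ℤ) *
        (weylDenominator (y ∘ w) * ∏ j, (y (w j))⁻¹ ^ (j : ℕ)) := by ring
    _ = (vandermonde y⁻¹).det⁻¹ * (vandermonde y⁻¹).det * ((sign w : ℤ) * (sign w : ℤ)) := by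
      rw [hD]; ring
    _ = 1 := by rw [intCast_units_mul_self, inv_mul_cancel₀ hV, one_mul]

theorem sum_inv_weylDenominator_comp_perm {y : Fin n → K} (hy : ∀ i, y i ≠ 0)
    (hinj : Function.Injective y) :
    ∑ w : Equiv.Perm (Fin n), (weylDenominator (y ∘ w))⁻¹ = 1 := by
  simp_rw [inv_weylDenominator_comp_perm hy hinj]
  rw [← Finset.mul_sum, inv_mul_eq_one₀ (det_vandermonde_inv_ne_zero hinj), det_apply']
  rfl

/-- Every coset of `Sₘ` in `Sₙ` contributes its common value of `G` times the sum of the reciprocal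
Weyl denominators over `Sₘ`, which is `1`. -/
theorem factorial_mul_sum_mul_inv_weylDenominator {m : ℕ} (hm : m ≤ n) {y : Fin n → K}
    (hy : ∀ i, y i ≠ 0) (hinj : Function.Injective y) {G : Equiv.Perm (Fin n) → K}
    (hG : ∀ w (u : Equiv.Perm (Fin m)), G (w * u.viaFintypeEmbedding (Fin.castLEEmb hm)) = G w) :
    (m.factorial : K) * ∑ w, G w * (weylDenominator (y ∘ w ∘ Fin.castLE hm))⁻¹ = ∑ w, G w := by
  set ι := Fin.castLEEmb hm
  let T (w : Equiv.Perm (Fin n)) : K := G w * (weylDenominator (y ∘ w ∘ Fin.castLE hm))⁻¹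
  have translate (w) (u : Equiv.Perm (Fin m)) :
      T (w * u.viaFintypeEmbedding ι) = G w * (weylDenominator ((y ∘ w ∘ ι) ∘ u))⁻¹ := by
    have hu : (w * u.viaFintypeEmbedding ι) ∘ Fin.castLE hm = (w ∘ ι) ∘ u :=
      funext fun i => congrArg w (u.viaFintypeEmbedding_apply_image ι i)
    simp only [T, hG, hu]
    rfl
  calc (m.factorial : K) * ∑ w, T w
      = ∑ _u : Equiv.Perm (Fin m), ∑ w, T w := by
        rw [Finset.sum_const, Finset.card_univ, Fintype.card_perm, Fintype.card_fin, nsmul_eq_mul]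
    _ = ∑ u : Equiv.Perm (Fin m), ∑ w, T (w * u.viaFintypeEmbedding ι) :=
        Finset.sum_congr rfl fun u _ => (Equiv.sum_comp (Equiv.mulRight _) T).symm
    _ = ∑ w, ∑ u : Equiv.Perm (Fin m), G w * (weylDenominator ((y ∘ w ∘ ι) ∘ u))⁻¹ := by
        simp_rw [translate]
        exact Finset.sum_comm
    _ = ∑ w, G w := Finset.sum_congr rfl fun w _ => by
        rw [← Finset.mul_sum, sum_inv_weylDenominator_comp_perm (y := y ∘ w ∘ ι) (fun i => hy _)
          (hinj.comp (w.injective.comp ι.injective)), mul_one]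

theorem weylDenominator_eq_mul_castLE {m : ℕ} (hm : m ≤ n) (y : Fin n → K) :
    weylDenominator y = (∏ j ∈ {j : Fin n | m ≤ (j : ℕ)}, ∏ i ∈ Finset.Iio j, (1 - (y i)⁻¹ * y j)) *
      weylDenominator (y ∘ Fin.castLE hm) := by
  have hfilter : (Finset.univ.filter fun j : Fin n => ¬ m ≤ (j : ℕ)) =
      Finset.univ.map (Fin.castLEEmb hm) := by
    ext j
    simp only [Finset.mem_filter, Finset.mem_univ, true_and, Finset.mem_map, not_le]
    exact ⟨fun hj => ⟨⟨j, hj⟩, rfl⟩, fun ⟨i, hi⟩ => hi ▸ i.2⟩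
  rw [weylDenominator, ← Finset.prod_filter_mul_prod_filter_not _ (fun j : Fin n => m ≤ (j : ℕ)),
    hfilter, Finset.prod_map]
  simp only [Fin.coe_castLEEmb, ← Fin.map_castLEEmb_Iio, Finset.prod_map]
  rfl

end WeylDenominator

section LaurentPolynomials

open AddMonoidAlgebra
open Matrix (vandermonde vandermonde_apply det_vandermonde_ne_zero_iff det_apply')
open Equiv.Perm (sign)

variable {n : ℕ}

theorem X_mul_Xinv (i : Fin n) : X i * Xinv i = 1 := by
  rw [X, Xinv, single_mul_single, ← Pi.single_add, add_neg_cancel, Pi.single_zero, mul_one, one_def]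

/-- The variable `xᵢ` as a unit of `R n`, so that it has integer powers. -/
def unitX (i : Fin n) : (R n)ˣ :=
  ⟨X i, Xinv i, X_mul_Xinv i, by rw [mul_comm, X_mul_Xinv]⟩

theorem single_one_eq_prod_unitX_zpow (m : Fin n → ℤ) :
    (single m 1 : R n) = ((∏ i, unitX i ^ m i : (R n)ˣ) : R n) := by
  let φ : Multiplicative (Fin n → ℤ) →* (R n)ˣ :=
    (Units.map (of ℤ (Fin n → ℤ))).comp toUnits.toMonoidHom
  have φ_single (i : Fin n) : φ (.ofAdd (Pi.single i 1)) = unitX i := Units.ext rfl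
  have hm : Multiplicative.ofAdd m = ∏ i, Multiplicative.ofAdd (Pi.single i (1 : ℤ)) ^ m i := by
    simp_rw [← ofAdd_zsmul, ← Pi.single_smul, smul_eq_mul, mul_one]
    rw [← ofAdd_sum, Finset.univ_sum_single]
  change ((φ (.ofAdd m) : (R n)ˣ) : R n) = _
  simp_rw [hm, map_prod, map_zpow, φ_single]

theorem permHom_single (w : Equiv.Perm (Fin n)) (m : Fin n → ℤ) (c : ℤ) :
    permHom w (single m c) = single (m ∘ w.symm) c := by
  simp [permHom, permExp]

theorem permHom_single_piSingle (w : Equiv.Perm (Fin n)) (i : Fin n) (c : ℤ) :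
    permHom w (single (Pi.single i c) 1) = single (Pi.single (w i) c) 1 := by
  rw [permHom_single]
  congr 1
  ext l
  simp [Pi.single_apply, Equiv.symm_apply_eq]

theorem permHom_X (w : Equiv.Perm (Fin n)) (i : Fin n) : permHom w (X i) = X (w i) :=
  permHom_single_piSingle w i 1

theorem permHom_Xinv (w : Equiv.Perm (Fin n)) (i : Fin n) : permHom w (Xinv i) = Xinv (w i) :=
  permHom_single_piSingle w i (-1)

theorem permHom_permHom (u w : Equiv.Perm (Fin n)) (f : R n) :
    permHom u (permHom w f) = permHom (u * w) f := by
  have : permHom (u * w) = (permHom u).comp (permHom w) :=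
    mapDomainRingHom_comp (permExp u) (permExp w)
  rw [this, RingHom.comp_apply]

theorem piSingle_left_injective {c : ℤ} (hc : c ≠ 0) :
    Function.Injective fun i : Fin n => (Pi.single i c : Fin n → ℤ) := fun i j h => by
  by_contra hne
  exact hc (by simpa [Pi.single_apply, hne] using congrFun h i)

theorem X_injective : Function.Injective (X : Fin n → R n) :=
  (single_left_injective one_ne_zero).comp (piSingle_left_injective one_ne_zero)

theorem Xinv_injective : Function.Injective (Xinv : Fin n → R n) :=
  (single_left_injective one_ne_zero).comp (piSingle_left_injective (by decide))

/-- The alternating sum `∑_w sgn(w) w(f)` of the permutations of a Laurent polynomial. -/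
def alternation (f : R n) : R n :=
  ∑ w : Equiv.Perm (Fin n), ((sign w : ℤ) : R n) * permHom w f

theorem permHom_alternation (u : Equiv.Perm (Fin n)) (f : R n) :
    permHom u (alternation f) = ((sign u : ℤ) : R n) * alternation f := by
  simp only [alternation, map_sum, map_mul, map_intCast, permHom_permHom, Finset.mul_sum]
  refine Fintype.sum_equiv (Equiv.mulLeft u) _ _ fun w => ?_
  rw [Equiv.coe_mulLeft, Equiv.Perm.sign_mul, Units.val_mul, Int.cast_mul, ← mul_assoc,
    ← mul_assoc, intCast_units_mul_self, one_mul]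

theorem alternation_single_one (m : Fin n → ℤ) :
    alternation (single m 1) = (Matrix.of fun i j => ((unitX i ^ m j : (R n)ˣ) : R n)).det := by
  rw [alternation, det_apply']
  refine Finset.sum_congr rfl fun w _ => ?_
  rw [permHom_single, single_one_eq_prod_unitX_zpow, ← Equiv.prod_comp w, Units.coe_prod]
  simp

theorem det_vandermonde_Xinv_dvd_alternation (f : R n) :
    (vandermonde (Xinv : Fin n → R n)).det ∣ alternation f := by
  induction f using AddMonoidAlgebra.induction_linear with
  | zero => simp [alternation]
  | add f g hf hg =>
    have : alternation (f + g) = alternation f + alternation g := by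
      simp only [alternation, map_add, mul_add, Finset.sum_add_distrib]
    exact this ▸ dvd_add hf hg
  | single m c =>
    have : alternation (single m c) = c • alternation (single m 1) := by
      simp only [alternation, permHom_single, Finset.smul_sum, ← mul_smul_comm, smul_single,
        smul_eq_mul, mul_one]
    rw [this, alternation_single_one]
    rw [zsmul_eq_mul]
    refine Dvd.dvd.mul_left ?_ _
    have hdvd := det_vandermonde_dvd_det_zpow (fun i => (unitX i)⁻¹) (fun j => -m j)
    simp only [inv_zpow', neg_neg] at hdvd
    exact hdvd

/-- The Weyl symmetrization `∑_w w(f / ∏_{i < j} (1 - xᵢ⁻¹ xⱼ))` of `f`, as a Laurent polynomial.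
It is the quotient of two alternating Laurent polynomials, since `∏_{i < j} (1 - xᵢ⁻¹ xⱼ)` times
the monomial `∏ j, xⱼ⁻ʲ` (indices from `0`) is the Vandermonde determinant in the `xᵢ⁻¹`. -/
def weylSymmetrization (f : R n) : R n :=
  (det_vandermonde_Xinv_dvd_alternation (f * ∏ j, Xinv j ^ (j : ℕ))).choose

theorem det_vandermonde_Xinv_mul_weylSymmetrization (f : R n) :
    (vandermonde (Xinv : Fin n → R n)).det * weylSymmetrization f =
      alternation (f * ∏ j, Xinv j ^ (j : ℕ)) :=
  (det_vandermonde_Xinv_dvd_alternation (f * ∏ j, Xinv j ^ (j : ℕ))).choose_spec.symm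

theorem permHom_det_vandermonde_Xinv (u : Equiv.Perm (Fin n)) :
    permHom u (vandermonde (Xinv : Fin n → R n)).det =
      ((sign u : ℤ) : R n) * (vandermonde (Xinv : Fin n → R n)).det := by
  rw [← det_vandermonde_comp_perm, RingHom.map_det]
  congr 1
  ext i j
  simp [vandermonde_apply, permHom_Xinv]

theorem symmP_weylSymmetrization (f : R n) : SymmP (weylSymmetrization f) := fun u => by
  have hV : (vandermonde (Xinv : Fin n → R n)).det ≠ 0 :=
    det_vandermonde_ne_zero_iff.2 Xinv_injective
  have hs : ((sign u : ℤ) : R n) ≠ 0 := left_ne_zero_of_mul_eq_one (intCast_units_mul_self (sign u))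
  refine mul_left_cancel₀ (mul_ne_zero hs hV) ?_
  rw [← permHom_det_vandermonde_Xinv, ← map_mul, det_vandermonde_Xinv_mul_weylSymmetrization,
    permHom_alternation, permHom_det_vandermonde_Xinv, mul_assoc,
    det_vandermonde_Xinv_mul_weylSymmetrization]

section Specialization

variable {K : Type*} [Field K] (h : R n →+* K)

theorem map_X_ne_zero (i : Fin n) : h (X i) ≠ 0 :=
  ((unitX i).isUnit.map h).ne_zero

theorem map_Xinv (i : Fin n) : h (Xinv i) = (h (X i))⁻¹ :=
  eq_inv_of_mul_eq_one_right (by rw [← map_mul, X_mul_Xinv, map_one])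

theorem map_single_one (m : Fin n → ℤ) : h (single m 1) = ∏ i, h (X i) ^ m i := by
  rw [single_one_eq_prod_unitX_zpow, Units.coe_prod, map_prod]
  refine Finset.prod_congr rfl fun i _ => ?_
  change ((Units.map h.toMonoidHom (unitX i ^ m i) : Kˣ) : K) = _
  rw [map_zpow, Units.val_zpow_eq_zpow_val]
  rfl

theorem map_denF : h (denF n) = weylDenominator (h ∘ X) := by
  rw [denF, weylDenominator, map_prod, Finset.prod_finset_product_right _ Finset.univ Finset.Iio
    (by simp)]
  simp [map_Xinv]

theorem comp_permHom_comp_X (w : Equiv.Perm (Fin n)) :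
    h.comp (permHom w) ∘ X = (h ∘ X) ∘ w := by
  ext i
  simp [permHom_X]

theorem map_permHom_denF (w : Equiv.Perm (Fin n)) :
    h (permHom w (denF n)) = weylDenominator ((h ∘ X) ∘ w) := by
  rw [← RingHom.comp_apply, map_denF, comp_permHom_comp_X]

theorem map_weylSymmetrization {h : R n →+* K} (hinj : Function.Injective (h ∘ X)) (f : R n) :
    h (weylSymmetrization f) =
      ∑ w : Equiv.Perm (Fin n), h (permHom w f) * (h (permHom w (denF n)))⁻¹ := by
  have map_vandermonde :
      h (vandermonde (Xinv : Fin n → R n)).det = (vandermonde (h ∘ X)⁻¹).det := by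
    rw [RingHom.map_det]
    congr 1
    ext i j
    simp [vandermonde_apply, map_Xinv]
  have hV := det_vandermonde_inv_ne_zero hinj
  refine mul_left_cancel₀ hV ?_
  rw [← map_vandermonde, ← map_mul, det_vandermonde_Xinv_mul_weylSymmetrization, alternation,
    map_sum, Finset.mul_sum]
  refine Finset.sum_congr rfl fun w _ => ?_
  rw [map_permHom_denF, inv_weylDenominator_comp_perm (y := h ∘ X) (map_X_ne_zero h) hinj,
    map_vandermonde, mul_left_comm (h (permHom w f)), mul_inv_cancel_left₀ hV]
  simp only [map_mul, map_prod, map_pow, map_intCast, permHom_Xinv, map_Xinv, Function.comp_apply]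
  ring

end Specialization

end LaurentPolynomials

section ParabolicFactor

variable {K : Type*} [Field K] {n m : ℕ} {a : ℤ}

/-- The numerator of `F` with the cutoff `2k` replaced by an arbitrary `m`:
`(x₁⋯xₘ)^a ∏_{i < j, j > m} (1 - xᵢxⱼ)`. -/
def cutoffNum (n m : ℕ) (a : ℤ) : R n :=
  AddMonoidAlgebra.single (fun i : Fin n => if (i : ℕ) < m then a else 0) (1 : ℤ) *
    ∏ p ∈ Finset.univ.filter (fun p : Fin n × Fin n => p.1 < p.2 ∧ m ≤ (p.2 : ℕ)),
      (1 - X p.1 * X p.2)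

/-- The factor `(y₁⋯yₘ)^a ∏_{i < j, j > m} (1 - yᵢyⱼ) / (1 - yᵢ⁻¹yⱼ)` of `F` at a point `y`. What
is left of `F` is the reciprocal of the Weyl denominator in the first `m` coordinates. -/
def parabolicFactor (m : ℕ) (a : ℤ) (y : Fin n → K) : K :=
  (∏ i ∈ {i : Fin n | (i : ℕ) < m}, y i) ^ a *
    ∏ j ∈ {j : Fin n | m ≤ (j : ℕ)}, ∏ i ∈ Finset.Iio j, (1 - y i * y j) / (1 - (y i)⁻¹ * y j)

theorem map_cutoffNum (h : R n →+* K) :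
    h (cutoffNum n m a) = (∏ i ∈ {i : Fin n | (i : ℕ) < m}, h (X i)) ^ a *
      ∏ j ∈ {j : Fin n | m ≤ (j : ℕ)}, ∏ i ∈ Finset.Iio j, (1 - h (X i) * h (X j)) := by
  rw [cutoffNum, map_mul, map_single_one, map_prod,
    Finset.prod_finset_product_right _ (Finset.univ.filter fun j : Fin n => m ≤ (j : ℕ)) Finset.Iio
      (by simp [and_comm])]
  congr 1
  · rw [← Finset.prod_zpow, Finset.prod_filter]
    exact Finset.prod_congr rfl fun i _ => by split_ifs <;> simp
  · simp

theorem map_cutoffNum_mul_inv_map_denF (hm : m ≤ n) (h : R n →+* K) :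
    h (cutoffNum n m a) * (h (denF n))⁻¹ =
      parabolicFactor m a (h ∘ X) * (weylDenominator ((h ∘ X) ∘ Fin.castLE hm))⁻¹ := by
  rw [map_cutoffNum, map_denF, weylDenominator_eq_mul_castLE hm, parabolicFactor, mul_inv]
  simp only [Finset.prod_div_distrib, Function.comp_apply]
  ring

theorem map_permHom_cutoffNum_mul_inv (hm : m ≤ n) (h : R n →+* K) (w : Equiv.Perm (Fin n)) :
    h (permHom w (cutoffNum n m a)) * (h (permHom w (denF n)))⁻¹ =
      parabolicFactor m a ((h ∘ X) ∘ w) * (weylDenominator ((h ∘ X) ∘ w ∘ Fin.castLE hm))⁻¹ := by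
  have := map_cutoffNum_mul_inv_map_denF (a := a) hm (h.comp (permHom w))
  rwa [comp_permHom_comp_X] at this

theorem parabolicFactor_comp_perm (y : Fin n → K) {u : Equiv.Perm (Fin n)}
    (hu : ∀ j : Fin n, m ≤ j → u j = j) :
    parabolicFactor m a (y ∘ u) = parabolicFactor m a y := by
  have le_iff (i : Fin n) : m ≤ u i ↔ m ≤ i :=
    ⟨fun hi => u.injective (hu (u i) hi) ▸ hi, fun hi => (hu i hi).symm ▸ hi⟩
  have lt_iff {i j : Fin n} (hj : m ≤ j) : i < j ↔ u i < j := by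
    have := le_iff i
    by_cases hi : m ≤ i
    · rw [hu i hi]
    · lia
  unfold parabolicFactor
  congr 1
  · congr 1
    exact Finset.prod_equiv u (fun i => by simpa using (le_iff i).not.symm) fun i _ => rfl
  · refine Finset.prod_congr rfl fun j hj => ?_
    have hj : m ≤ (j : ℕ) := by simpa using hj
    refine Finset.prod_equiv u (fun i => by simpa using lt_iff hj) fun i _ => ?_
    simp [hu j hj]

theorem factorial_mul_map_weylSymmetrization_cutoffNum (hm : m ≤ n) {h : R n →+* K}
    (hinj : Function.Injective (h ∘ X)) :
    (m.factorial : K) * h (weylSymmetrization (cutoffNum n m a)) =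
      ∑ w : Equiv.Perm (Fin n), parabolicFactor m a ((h ∘ X) ∘ w) := by
  simp only [map_weylSymmetrization hinj, map_permHom_cutoffNum_mul_inv hm]
  refine factorial_mul_sum_mul_inv_weylDenominator hm (map_X_ne_zero h) hinj
    (G := fun w => parabolicFactor m a ((h ∘ X) ∘ w)) fun w u => ?_
  refine parabolicFactor_comp_perm ((h ∘ X) ∘ w) fun j hj => ?_
  refine u.viaFintypeEmbedding_apply_notMem_range (Fin.castLEEmb hm) ?_
  rintro ⟨i, rfl⟩
  exact hj.not_gt i.2

theorem parabolicFactor_eq_zero {y : Fin n → K} {p q : Fin n} (hpq : p < q) (hq : m ≤ q)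
    (hy : y p * y q = 1) : parabolicFactor m a y = 0 :=
  mul_eq_zero_of_right _ <| Finset.prod_eq_zero (by simpa using hq) <|
    Finset.prod_eq_zero (Finset.mem_Iio.2 hpq) (by simp [hy])

theorem prod_eq_prod_sdiff_pair {ι M : Type*} [DecidableEq ι] [CommMonoid M] {s : Finset ι}
    {p q : ι} {f : ι → M} (hp : p ∈ s) (hq : q ∈ s) (hpq : p ≠ q) (hf : f p * f q = 1) :
    ∏ i ∈ s, f i = ∏ i ∈ s \ {p, q}, f i := by
  rw [← Finset.prod_sdiff (Finset.insert_subset hp (Finset.singleton_subset_iff.2 hq)),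
    Finset.prod_pair hpq, hf, mul_one]

theorem ratio_mul_ratio_eq_one {b c x : K} (hbc : b * c = 1) (hb : x ≠ b) (hc : x ≠ c) :
    (1 - b * x) / (1 - b⁻¹ * x) * ((1 - c * x) / (1 - c⁻¹ * x)) = 1 := by
  obtain rfl : c = b⁻¹ := eq_inv_of_mul_eq_one_right hbc
  have hnum : 1 - b * x ≠ 0 := fun h => hc (eq_inv_of_mul_eq_one_right (sub_eq_zero.1 h).symm)
  have hden : 1 - b⁻¹ * x ≠ 0 := fun h =>
    hb ((eq_inv_of_mul_eq_one_right (sub_eq_zero.1 h).symm).trans (inv_inv b))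
  rw [inv_inv, div_mul_div_comm, mul_comm (1 - b⁻¹ * x), div_self (mul_ne_zero hnum hden)]

theorem parabolicFactor_eq_prod_sdiff_pair {y : Fin n → K} {p q : Fin n} (hpq : p ≠ q) (hp : p < m)
    (hq : q < m) (hinj : Function.Injective y) (hy : y p * y q = 1) :
    parabolicFactor m a y =
      (∏ i ∈ (Finset.univ.filter fun i : Fin n => (i : ℕ) < m) \ {p, q}, y i) ^ a *
        ∏ j ∈ {j : Fin n | m ≤ (j : ℕ)}, ∏ i ∈ Finset.Iio j \ {p, q},
          (1 - y i * y j) / (1 - (y i)⁻¹ * y j) := by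
  rw [parabolicFactor, prod_eq_prod_sdiff_pair (by simpa) (by simpa) hpq hy]
  congr 1
  refine Finset.prod_congr rfl fun j hj => ?_
  have hj : m ≤ (j : ℕ) := by simpa using hj
  refine prod_eq_prod_sdiff_pair (Finset.mem_Iio.2 (by lia)) (Finset.mem_Iio.2 (by lia)) hpq ?_
  exact ratio_mul_ratio_eq_one hy (hinj.ne (by lia)) (hinj.ne (by lia))

theorem parabolicFactor_congr {y z : Fin n → K} {p q : Fin n} (hpq : p ≠ q)
    (hyinj : Function.Injective y) (hzinj : Function.Injective z)
    (hy : y p * y q = 1) (hz : z p * z q = 1) (hyz : ∀ i, i ≠ p → i ≠ q → y i = z i) :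
    parabolicFactor m a y = parabolicFactor m a z := by
  wlog hlt : p < q generalizing p q
  · exact this hpq.symm (mul_comm (y p) _ ▸ hy) (mul_comm (z p) _ ▸ hz)
      (fun i hp hq => hyz i hq hp) (hpq.lt_or_gt.resolve_left hlt)
  rcases le_or_gt m q with hq | hq
  · rw [parabolicFactor_eq_zero hlt hq hy, parabolicFactor_eq_zero hlt hq hz]
  · have hp : (p : ℕ) < m := lt_trans hlt hq
    have hyz_sdiff (s : Finset (Fin n)) : ∀ i ∈ s \ {p, q}, y i = z i := fun i hi =>
      hyz i (by grind) (by grind)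
    rw [parabolicFactor_eq_prod_sdiff_pair hpq hp hq hyinj hy,
      parabolicFactor_eq_prod_sdiff_pair hpq hp hq hzinj hz,
      Finset.prod_congr rfl (hyz_sdiff _)]
    congr 1
    refine Finset.prod_congr rfl fun j hj => Finset.prod_congr rfl fun i hi => ?_
    have hj : m ≤ (j : ℕ) := by simpa using hj
    rw [hyz_sdiff _ i hi, hyz j (by lia) (by lia)]

theorem map_weylSymmetrization_cutoffNum_congr [CharZero K] (hm : m ≤ n) {h₁ h₂ : R n →+* K}
    (hinj₁ : Function.Injective (h₁ ∘ X)) (hinj₂ : Function.Injective (h₂ ∘ X)) {p q : Fin n}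
    (hpq : p ≠ q) (hmul₁ : h₁ (X p) * h₁ (X q) = 1) (hmul₂ : h₂ (X p) * h₂ (X q) = 1)
    (heq : ∀ i, i ≠ p → i ≠ q → h₁ (X i) = h₂ (X i)) :
    h₁ (weylSymmetrization (cutoffNum n m a)) = h₂ (weylSymmetrization (cutoffNum n m a)) := by
  refine mul_left_cancel₀ (Nat.cast_ne_zero.2 m.factorial_ne_zero : (m.factorial : K) ≠ 0) ?_
  rw [factorial_mul_map_weylSymmetrization_cutoffNum hm hinj₁,
    factorial_mul_map_weylSymmetrization_cutoffNum hm hinj₂]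
  refine Finset.sum_congr rfl fun w _ => ?_
  refine parabolicFactor_congr (w.symm.injective.ne hpq) (hinj₁.comp w.injective)
    (hinj₂.comp w.injective) (by simpa) (by simpa) fun i hp hq => heq (w i) ?_ ?_
  · exact fun h => hp (w.eq_symm_apply.2 h)
  · exact fun h => hq (w.eq_symm_apply.2 h)

end ParabolicFactor

section Evaluation

open AddMonoidAlgebra

variable {n : ℕ}

/-- The substitution `t ↦ t²` on exponents. -/
def squareTExp (n : ℕ) : ((Fin (n - 2) → ℤ) × ℤ) →+ ((Fin (n - 2) → ℤ) × ℤ) :=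
  (AddMonoidHom.id _).prodMap (AddMonoidHom.mulLeft 2)

/-- The substitution `t ↦ t²` in `ℤ[x₁^{±1}, …, x_{n-2}^{±1}, t^{±1}]`. Its fixed points are the
elements that do not involve `t`. -/
def squareT (n : ℕ) :
    AddMonoidAlgebra ℤ ((Fin (n - 2) → ℤ) × ℤ) →+* AddMonoidAlgebra ℤ ((Fin (n - 2) → ℤ) × ℤ) :=
  mapDomainRingHom ℤ (squareTExp n)

theorem squareTExp_injective : Function.Injective (squareTExp n) :=
  Function.Injective.prodMap Function.injective_id (mul_right_injective₀ two_ne_zero)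

theorem squareT_injective : Function.Injective (squareT n) :=
  mapDomain_injective squareTExp_injective

/-- An exponent of `g` of largest absolute `t`-degree `d` is doubled by the substitution, so
`2 * d ≤ d`. -/
theorem snd_eq_zero_of_squareT_eq {g : AddMonoidAlgebra ℤ ((Fin (n - 2) → ℤ) × ℤ)}
    (hg : squareT n g = g) : ∀ e ∈ g.coeff.support, e.2 = 0 := by
  have mem_support {e} (he : e ∈ g.coeff.support) : squareTExp n e ∈ g.coeff.support := by
    have : g.coeff (squareTExp n e) = g.coeff e := by
      conv_lhs => rw [← hg]
      exact Finsupp.mapDomain_apply squareTExp_injective _ _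
    rwa [Finsupp.mem_support_iff, this, ← Finsupp.mem_support_iff]
  intro e he
  obtain ⟨d, hd, hmax⟩ := g.coeff.support.exists_max_image (fun d => |d.2|) ⟨e, he⟩
  have hdouble : |2 * d.2| ≤ |d.2| := hmax _ (mem_support hd)
  rw [abs_mul, abs_two] at hdouble
  exact abs_nonpos_iff.1 ((hmax e he).trans (by linarith))

theorem noT_of_squareT_eq {g : AddMonoidAlgebra ℤ ((Fin (n - 2) → ℤ) × ℤ)}
    (hg : squareT n g = g) : NoT n g := by
  refine ⟨comapDomain _ (Prod.mk_left_injective 0) g, mapDomain_comapDomain ?_ _⟩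
  exact fun e he => ⟨e.1, Prod.ext rfl (snd_eq_zero_of_squareT_eq hg e he).symm⟩

theorem evExp_snd (hn : 2 ≤ n) (e : Fin n → ℤ) :
    (evExp n e).2 = e ⟨n - 2, by lia⟩ - e ⟨n - 1, by lia⟩ :=
  dif_pos hn

theorem ev_X (i : Fin n) : ev n (X i) = single (evExp n (Pi.single i 1)) 1 := by
  simp only [ev, X, mapDomainRingHom_apply, mapDomain_single]

theorem evExp_piSingle (hn : 2 ≤ n) (i : Fin n) : evExp n (Pi.single i 1) =
    (fun l : Fin (n - 2) => if (l : ℕ) = i then 1 else 0,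
      (if (i : ℕ) = n - 2 then 1 else 0) - if (i : ℕ) = n - 1 then 1 else 0) := by
  refine Prod.ext (funext fun l => ?_) ((evExp_snd hn _).trans ?_)
  · simp [evExp, Pi.single_apply, Fin.ext_iff]
  · simp [Pi.single_apply, Fin.ext_iff, eq_comm]

theorem ev_X_of_lt {i : Fin n} (hi : i < n - 2) :
    ev n (X i) = single (Pi.single ⟨i, hi⟩ 1, 0) 1 := by
  rw [ev_X, evExp_piSingle (by lia)]
  congr 2
  · ext l
    simp [Pi.single_apply, Fin.ext_iff]
  · grind

theorem ev_X_penultimate (hn : 2 ≤ n) : ev n (X ⟨n - 2, by lia⟩) = single (0, 1) 1 := by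
  rw [ev_X, evExp_piSingle hn]
  congr 2
  · exact funext fun l => if_neg l.2.ne
  · grind

theorem ev_X_last (hn : 2 ≤ n) : ev n (X ⟨n - 1, by lia⟩) = single (0, -1) 1 := by
  rw [ev_X, evExp_piSingle hn]
  congr 2
  · exact funext fun l => if_neg (by lia)
  · grind

theorem ev_X_injective (hn : 2 ≤ n) : Function.Injective (ev n ∘ X) := fun i j h => by
  simp only [Function.comp_apply, ev_X] at h
  replace h := single_left_injective one_ne_zero h
  simp only [evExp_piSingle hn, Prod.mk.injEq] at h
  obtain ⟨hx, ht⟩ := h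
  by_cases hi : i < n - 2
  · have := congrFun hx ⟨i, hi⟩
    grind
  by_cases hj : j < n - 2
  · have := congrFun hx ⟨j, hj⟩
    grind
  grind

theorem ev_X_mul_ev_X (hn : 2 ≤ n) :
    ev n (X ⟨n - 2, by lia⟩) * ev n (X ⟨n - 1, by lia⟩) = 1 := by
  rw [ev_X_penultimate hn, ev_X_last hn, single_mul_single, Prod.mk_add_mk, add_zero,
    add_neg_cancel, mul_one]
  rfl

theorem squareT_ev_X {i : Fin n} (hi : i < n - 2) : squareT n (ev n (X i)) = ev n (X i) := by
  rw [ev_X_of_lt hi]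
  simp [squareT, squareTExp]

theorem noT_ev_weylSymmetrization_cutoffNum {m : ℕ} (hm : m ≤ n) (hn : 2 ≤ n) (a : ℤ) :
    NoT n (ev n (weylSymmetrization (cutoffNum n m a))) := by
  let L := FractionRing (AddMonoidAlgebra ℤ ((Fin (n - 2) → ℤ) × ℤ))
  let ι := algebraMap (AddMonoidAlgebra ℤ ((Fin (n - 2) → ℤ) × ℤ)) L
  have hι : Function.Injective ι := IsFractionRing.injective _ _
  have : CharZero (AddMonoidAlgebra ℤ ((Fin (n - 2) → ℤ) × ℤ)) :=
    charZero_of_injective_algebraMap (FaithfulSMul.algebraMap_injective ℤ _)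
  have : CharZero L := IsFractionRing.charZero _
  apply noT_of_squareT_eq
  refine hι (map_weylSymmetrization_cutoffNum_congr (h₁ := ι.comp ((squareT n).comp (ev n)))
    (h₂ := ι.comp (ev n)) hm ?_ ?_ (p := ⟨n - 2, by lia⟩) (q := ⟨n - 1, by lia⟩) ?_ ?_ ?_ ?_)
  · exact hι.comp (squareT_injective.comp (ev_X_injective hn))
  · exact hι.comp (ev_X_injective hn)
  · simp only [ne_eq, Fin.mk.injEq]
    lia
  · simp only [RingHom.comp_apply, ← map_mul, ev_X_mul_ev_X hn, map_one]
  · simp only [RingHom.comp_apply, ← map_mul, ev_X_mul_ev_X hn, map_one]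
  · intro i hp hq
    have hi : i < n - 2 := by
      simp only [ne_eq, Fin.ext_iff] at hp hq
      lia
    simp only [RingHom.comp_apply, squareT_ev_X hi]

end Evaluation

theorem sum_perm_F_mem_J_general (n m : ℕ) (hm : m ≤ n) (a : ℤ) :
    ∃ e : R n, e ∈ J n ∧
      algebraMap (R n) (FractionRing (R n)) e =
        ∑ w : Equiv.Perm (Fin n),
          algebraMap (R n) (FractionRing (R n)) (permHom w (cutoffNum n m a)) *
            (algebraMap (R n) (FractionRing (R n)) (permHom w (denF n)))⁻¹ := by
  refine ⟨weylSymmetrization (cutoffNum n m a), ⟨symmP_weylSymmetrization _,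
    fun hn => noT_ev_weylSymmetrization_cutoffNum hm hn a⟩, map_weylSymmetrization ?_ _⟩
  exact (IsFractionRing.injective _ _).comp X_injective

/-- Let `1 ≤ k`, `2k ≤ n`, `a ∈ ℤ` and, in the field of
fractions of `Rₙ`,
`F := (x₁⋯x_{2k})^a ∏_{i<j, j>2k}(1-xᵢxⱼ) / ∏_{i<j}(1-xᵢ⁻¹xⱼ)` and
`E := ∑_{w ∈ Sₙ} w(F)`.  Then `E` is a (symmetric) Laurent polynomial and in
fact `E ∈ Jₙ`: there is `e ∈ Jₙ` mapping to `E` in the field of fractions. -/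
theorem sum_perm_F_mem_J (n k : ℕ) (hk : 1 ≤ k) (hkn : 2 * k ≤ n) (a : ℤ) :
    ∃ e : R n, e ∈ J n ∧
      algebraMap (R n) (FractionRing (R n)) e =
        ∑ w : Equiv.Perm (Fin n),
          algebraMap (R n) (FractionRing (R n)) (permHom w (numF n k a)) *
            (algebraMap (R n) (FractionRing (R n)) (permHom w (denF n)))⁻¹ :=
  sum_perm_F_mem_J_general n (2 * k) hkn a

end
end
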